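/- arXiv:1802.04137 — 2 statements merged into one kernel-verified Lean document; each statement's English description precedes it below -/
import Mathlib

section
/- Let E ⊆ ℝ/ℤ be an Erdős semi-group, i.e., E = ⋃_{i∈ℕ} F_i where each F_i is a closed ×2 mod 1 invariant set, there is W : ℕ² → ℕ with F_i + F_j ⊆ F_{W(i,j)} for all i, j, and each F_i contains x/2 (computed in [0,1)) whenever it contains x. Then the Hausdorff dimension of E is either 0 or 1. -/
open Filter MeasureTheory Set

/-- order shattering, from the least significant bit -/
def OShat (A : Set ℕ) (J : Finset ℕ) : Prop :=
  ∃ f : (ℕ → Bool) → ℕ, (∀ e, f e ∈ A) ∧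
    (∀ e e' b, (∀ i ∈ J, i < b → e i = e' i) → f e ≡ f e' [MOD 2 ^ b]) ∧
    (∀ e e' b, b ∈ J → (∀ i ∈ J, i < b → e i = e' i) → e b ≠ e' b →
      ¬ f e ≡ f e' [MOD 2 ^ (b + 1)])

lemma OShat.empty {A : Set ℕ} {a : ℕ} (h : a ∈ A) : OShat A ∅ :=
  ⟨fun _ => a, fun _ => h, fun _ _ _ _ => rfl, by simp⟩

lemma OShat.subset {A : Set ℕ} {J K : Finset ℕ} (h : OShat A J) (hK : K ⊆ J) : OShat A K := by
  obtain ⟨f, h1, h2, h3⟩ := h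
  refine ⟨fun e => f (fun i => if i ∈ K then e i else false), fun e => h1 _, ?_, ?_⟩
  · intro e e' b h
    apply h2
    intro i _ hi
    by_cases hiK : i ∈ K
    · simp [hiK, h i hiK hi]
    · simp [hiK]
  · intro e e' b hb h hne
    apply h3 _ _ _ (hK hb)
    · intro i _ hi
      by_cases hiK : i ∈ K
      · simp [hiK, h i hiK hi]
      · simp [hiK]
    · simpa [hb] using hne

lemma OShat.add {A B : Set ℕ} {J K : Finset ℕ} (hA : OShat A J) (hB : OShat B K)
    (hd : Disjoint J K) : OShat {c | ∃ a ∈ A, ∃ b ∈ B, c = a + b} (J ∪ K) := by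
  obtain ⟨f, f1, f2, f3⟩ := hA
  obtain ⟨g, g1, g2, g3⟩ := hB
  refine ⟨fun e => f e + g e, fun e => ⟨_, f1 e, _, g1 e, rfl⟩, ?_, ?_⟩
  · intro e e' b h
    exact (f2 _ _ _ fun i hi => h i (Finset.mem_union_left _ hi)).add
      (g2 _ _ _ fun i hi => h i (Finset.mem_union_right _ hi))
  · intro e e' b hb h hne hmod
    rcases Finset.mem_union.1 hb with hb | hb
    · have hbK : b ∉ K := Finset.disjoint_left.1 hd hb
      have hg : g e ≡ g e' [MOD 2 ^ (b + 1)] := g2 _ _ _ fun i hi hib =>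
        h i (Finset.mem_union_right _ hi)
          (lt_of_le_of_ne (by omega) (fun hh => hbK (hh ▸ hi)))
      exact f3 e e' b hb (fun i hi => h i (Finset.mem_union_left _ hi)) hne
        (Nat.ModEq.add_right_cancel hg hmod)
    · have hbK : b ∉ J := Finset.disjoint_right.1 hd hb
      have hg : f e ≡ f e' [MOD 2 ^ (b + 1)] := f2 _ _ _ fun i hi hib =>
        h i (Finset.mem_union_left _ hi)
          (lt_of_le_of_ne (by omega) (fun hh => hbK (hh ▸ hi)))
      exact g3 e e' b hb (fun i hi => h i (Finset.mem_union_right _ hi)) hne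
        (Nat.ModEq.add_left_cancel hg hmod)

lemma modEq_div {a a' s b : ℕ} (h : a ≡ a' [MOD 2 ^ (s + b)]) :
    a / 2 ^ s ≡ a' / 2 ^ s [MOD 2 ^ b] := by
  unfold Nat.ModEq at *
  rw [← Nat.mod_mul_right_div_self, ← Nat.mod_mul_right_div_self, ← pow_add, h]

lemma modEq_of_div {a a' s b : ℕ} (h0 : a ≡ a' [MOD 2 ^ s])
    (h : a / 2 ^ s ≡ a' / 2 ^ s [MOD 2 ^ b]) : a ≡ a' [MOD 2 ^ (s + b)] := by
  unfold Nat.ModEq at *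
  rw [pow_add, Nat.mod_mul, Nat.mod_mul, h0, h]

lemma OShat.shift {A B : Set ℕ} {J : Finset ℕ} (h : OShat A J) (s m : ℕ)
    (hAB : ∀ a ∈ A, a / 2 ^ s % 2 ^ m ∈ B) :
    OShat B ((Finset.range m).filter (fun b => b + s ∈ J)) := by
  obtain ⟨f, f1, f2, f3⟩ := h
  have key : ∀ e e' : ℕ → Bool, ∀ b, b ≤ m →
      (∀ i ∈ (Finset.range m).filter (fun b => b + s ∈ J), i < b → e i = e' i) →
      ∀ i ∈ J, i < s + b → (if s ≤ i ∧ i < s + m then e (i - s) else false)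
        = (if s ≤ i ∧ i < s + m then e' (i - s) else false) := by
    intro e e' b hbm h i hi hib
    by_cases hs : s ≤ i
    · have : i < s + m := by omega
      simp only [hs, this, and_self, if_true]
      apply h _ _ (by omega)
      simp only [Finset.mem_filter, Finset.mem_range]
      refine ⟨by omega, ?_⟩
      rwa [Nat.sub_add_cancel hs]
    · simp [hs]
  refine ⟨fun e => f (fun i => if s ≤ i ∧ i < s + m then e (i - s) else false) / 2 ^ s % 2 ^ m,
    fun e => hAB _ (f1 _), ?_, ?_⟩
  · intro e e' b h
    rcases le_total b m with hbm | hbm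
    · have h4 := modEq_div (f2 _ _ _ (key e e' b hbm h))
      have hd : 2 ^ b ∣ 2 ^ m := pow_dvd_pow 2 hbm
      exact (((Nat.mod_modEq _ _).of_dvd hd).trans h4).trans ((Nat.mod_modEq _ _).of_dvd hd).symm
    · have h4 := modEq_div (f2 _ _ _ (key e e' m le_rfl (fun i hi him => h i hi (by omega))))
      unfold Nat.ModEq at h4
      simp only [h4]; rfl
  · intro e e' b hb h hne hmod
    simp only [Finset.mem_filter, Finset.mem_range] at hb
    have hd : 2 ^ (b + 1) ∣ 2 ^ m := pow_dvd_pow 2 hb.1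
    have h5 := (((Nat.mod_modEq _ _).of_dvd hd).symm.trans hmod).trans
      ((Nat.mod_modEq _ _).of_dvd hd)
    have hk := key e e' b hb.1.le h
    have h6 := f2 _ _ s (fun i hi his => hk i hi (by omega))
    refine f3 (fun i => if s ≤ i ∧ i < s + m then e (i - s) else false)
      (fun i => if s ≤ i ∧ i < s + m then e' (i - s) else false) (s + b)
      (by rw [add_comm]; exact hb.2) hk ?_ ?_
    · simpa [hb.1] using hne
    · rw [add_assoc]; exact modEq_of_div h6 h5

lemma OShat.card_le {A : Set ℕ} {J : Finset ℕ} {m : ℕ} (h : OShat A J)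
    (hJ : J ⊆ Finset.range m) (B : Finset ℕ) (hB : ∀ a ∈ A, a % 2 ^ m ∈ B) :
    2 ^ J.card ≤ B.card := by
  obtain ⟨f, f1, f2, f3⟩ := h
  rw [← Finset.card_powerset]
  apply Finset.card_le_card_of_injOn (fun S => f (fun i => decide (i ∈ S)) % 2 ^ m)
  · intro S _; exact hB _ (f1 _)
  · intro S hS S' hS' heq
    simp only [Finset.coe_powerset, Set.mem_preimage, Set.mem_powerset_iff, Finset.coe_subset] at hS hS'
    by_contra hne
    have hex : ∃ b, ¬ (b ∈ S ↔ b ∈ S') := by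
      by_contra hh; push Not at hh; exact hne (Finset.ext hh)
    classical
    have hb := Nat.find_spec hex
    have hmin : ∀ i, i < Nat.find hex → (i ∈ S ↔ i ∈ S') := fun i hi => not_not.1 (Nat.find_min hex hi)
    set b := Nat.find hex
    have hbJ : b ∈ J := by
      by_contra hbJ
      exact hb ⟨fun h => absurd (hS h) hbJ, fun h => absurd (hS' h) hbJ⟩
    have hbm := Finset.mem_range.1 (hJ hbJ)
    refine f3 (fun i => decide (i ∈ S)) (fun i => decide (i ∈ S')) b hbJ
      (fun i _ hi => by simp [hmin i hi]) (by simpa using hb) ?_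
    exact Nat.ModEq.of_dvd (pow_dvd_pow 2 hbm) heq

lemma OShat.mono {A B : Set ℕ} {J : Finset ℕ} (h : OShat A J) (hAB : A ⊆ B) : OShat B J := by
  obtain ⟨f, f1, f2, f3⟩ := h
  exact ⟨f, fun e => hAB (f1 e), f2, f3⟩

def up (J : Finset ℕ) : Finset ℕ := J.map ⟨Nat.succ, Nat.succ_injective⟩

lemma mem_up {J : Finset ℕ} {i : ℕ} : i ∈ up J ↔ ∃ j ∈ J, j + 1 = i := by
  simp [up]

lemma zero_not_mem_up (J : Finset ℕ) : 0 ∉ up J := by simp [mem_up]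

lemma modEq_up {a a' r b : ℕ} :
    2 * a + r ≡ 2 * a' + r [MOD 2 ^ (b + 1)] ↔ a ≡ a' [MOD 2 ^ b] := by
  constructor
  · intro h
    have := Nat.ModEq.add_right_cancel' r h
    rw [pow_succ'] at this
    exact Nat.ModEq.mul_left_cancel' two_ne_zero this
  · intro h
    rw [pow_succ']
    exact (Nat.ModEq.mul_left' 2 h).add_right r

lemma OShat.up {A : Set ℕ} {J : Finset ℕ} (r : ℕ) (h : OShat {a | 2 * a + r ∈ A} J) :
    OShat A (up J) := by
  obtain ⟨f, f1, f2, f3⟩ := h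
  refine ⟨fun e => 2 * f (fun i => e (i + 1)) + r, fun e => f1 _, ?_, ?_⟩
  · intro e e' b h
    rcases b with _ | b
    · simp [Nat.modEq_one]
    · rw [modEq_up]
      apply f2
      intro i hi hib
      exact h _ (mem_up.2 ⟨i, hi, rfl⟩) (by omega)
  · intro e e' b hb h hne
    obtain ⟨b, hbJ, rfl⟩ := mem_up.1 hb
    rw [modEq_up]
    exact f3 _ _ _ hbJ (fun i hi hib => h _ (mem_up.2 ⟨i, hi, rfl⟩) (by omega)) hne

lemma OShat.up_both {A : Set ℕ} {J : Finset ℕ} (h : OShat {a | 2 * a ∈ A} J)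
    (h' : OShat {a | 2 * a + 1 ∈ A} J) : OShat A (insert 0 (_root_.up J)) := by
  obtain ⟨f, f1, f2, f3⟩ := h
  obtain ⟨g, g1, g2, g3⟩ := h'
  refine ⟨fun e => if e 0 then 2 * g (fun i => e (i + 1)) + 1 else 2 * f (fun i => e (i + 1)),
    fun e => ?_, ?_, ?_⟩
  · by_cases h : e 0
    · simp only [h, if_true]; exact g1 _
    · simp only [h]; exact f1 _
  · intro e e' b h
    rcases b with _ | b
    · simp [Nat.modEq_one]
    · have h0 := h 0 (by simp) (by omega)
      have hh : ∀ i ∈ J, i < b → e (i + 1) = e' (i + 1) := fun i hi hib =>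
        h _ (Finset.mem_insert_of_mem (mem_up.2 ⟨i, hi, rfl⟩)) (by omega)
      beta_reduce
      rw [← h0]
      by_cases he : e 0
      · simp only [he, if_true, modEq_up]; exact g2 _ _ _ hh
      · simp only [he]
        exact (modEq_up (r := 0)).2 (f2 _ _ _ hh)
  · intro e e' b hb h hne
    rcases b with _ | b
    · intro hm
      have hm : _ % 2 = _ % 2 := hm
      revert hm
      cases h1 : e 0 <;> cases h2 : e' 0 <;> simp_all
    · have hb : b ∈ J := by
        rcases Finset.mem_insert.1 hb with h | h
        · omega
        · obtain ⟨j, hj, hjb⟩ := mem_up.1 h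
          obtain rfl : j = b := by omega
          exact hj
      have h0 := h 0 (by simp) (by omega)
      have hh : ∀ i ∈ J, i < b → e (i + 1) = e' (i + 1) := fun i hi hib =>
        h _ (Finset.mem_insert_of_mem (mem_up.2 ⟨i, hi, rfl⟩)) (by omega)
      beta_reduce
      rw [← h0]
      by_cases he : e 0
      · simp only [he, if_true, modEq_up]; exact g3 _ _ _ hb hh hne
      · simp only [he]
        exact fun hm => f3 _ _ _ hb hh hne ((modEq_up (r := 0)).1 hm)

lemma up_injective : Function.Injective up := Finset.map_injective _

open Classical in
lemma card_le_OShat (n : ℕ) : ∀ A : Finset ℕ, (∀ a ∈ A, a < 2 ^ n) →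
    A.card ≤ ((Finset.range n).powerset.filter (fun J => OShat (A : Set ℕ) J)).card := by
  induction n with
  | zero =>
    intro A hA
    rcases A.eq_empty_or_nonempty with rfl | ⟨a, ha⟩
    · simp
    · have : A ⊆ {0} := fun x hx => by simpa using hA x hx
      have h1 : A.card ≤ 1 := by simpa using Finset.card_le_card this
      refine h1.trans (Finset.card_pos.2 ⟨∅, ?_⟩)
      simp only [Finset.mem_filter, Finset.mem_powerset, Finset.empty_subset, true_and]
      exact OShat.empty (a := a) (by simpa using ha)
  | succ n ih =>
    intro A hA
    have hr : ∀ r < 2, ∃ B : Finset ℕ, (∀ a, a ∈ B ↔ 2 * a + r ∈ A) ∧ (∀ a ∈ B, a < 2 ^ n) ∧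
        B.card = (A.filter (fun a => a % 2 = r)).card := by
      intro r hr
      refine ⟨(Finset.range (2 ^ n)).filter (fun a => 2 * a + r ∈ A), ?_, ?_, ?_⟩
      · intro a
        simp only [Finset.mem_filter, Finset.mem_range, and_iff_right_iff_imp]
        intro h
        have := hA _ h
        rw [pow_succ] at this; omega
      · intro a ha
        simp at ha; exact ha.1
      · apply Finset.card_bij (fun a _ => 2 * a + r)
        · intro a ha
          simp only [Finset.mem_filter] at ha ⊢
          exact ⟨ha.2, by omega⟩
        · intro a _ b _ h; omega
        · intro b hb
          simp only [Finset.mem_filter, Finset.mem_range] at hb ⊢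
          refine ⟨b / 2, ⟨?_, ?_⟩, by omega⟩
          · have := hA _ hb.1
            rw [pow_succ] at this; omega
          · have : 2 * (b / 2) + r = b := by omega
            rw [this]; exact hb.1
    obtain ⟨A0, a1, a2, a3⟩ := hr 0 (by omega)
    obtain ⟨A1, b1, b2, b3⟩ := hr 1 (by omega)
    have hcard : A.card = A0.card + A1.card := by
      rw [a3, b3, ← Finset.card_filter_add_card_filter_not (s := A) (fun a => a % 2 = 0)]
      congr 2
      ext x; simp
    have e0 : (A0 : Set ℕ) = {a | 2 * a + 0 ∈ (A : Set ℕ)} := by ext x; simpa using a1 x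
    have e1 : (A1 : Set ℕ) = {a | 2 * a + 1 ∈ (A : Set ℕ)} := by ext x; simpa using b1 x
    set S0 := (Finset.range n).powerset.filter (fun J => OShat (A0 : Set ℕ) J) with hS0
    set S1 := (Finset.range n).powerset.filter (fun J => OShat (A1 : Set ℕ) J) with hS1
    have hup : ∀ J ⊆ Finset.range n, up J ⊆ Finset.range (n + 1) := by
      intro J hJ i hi
      obtain ⟨j, hj, rfl⟩ := mem_up.1 hi
      have := Finset.mem_range.1 (hJ hj)
      simp; omega
    have hsub : (S0 ∪ S1).image up ∪ (S0 ∩ S1).image (fun J => insert 0 (up J)) ⊆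
        ((Finset.range (n+1)).powerset.filter (fun J => OShat (A : Set ℕ) J)) := by
      intro K hK
      simp only [Finset.mem_filter, Finset.mem_powerset]
      rcases Finset.mem_union.1 hK with h | h
      · obtain ⟨J, hJ, rfl⟩ := Finset.mem_image.1 h
        rcases Finset.mem_union.1 hJ with hJ | hJ
        · simp only [hS0, Finset.mem_filter, Finset.mem_powerset, e0] at hJ
          exact ⟨hup _ hJ.1, hJ.2.up 0⟩
        · simp only [hS1, Finset.mem_filter, Finset.mem_powerset, e1] at hJ
          exact ⟨hup _ hJ.1, hJ.2.up 1⟩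
      · obtain ⟨J, hJ, rfl⟩ := Finset.mem_image.1 h
        simp only [hS0, hS1, Finset.mem_inter, Finset.mem_filter, Finset.mem_powerset, e0, e1] at hJ
        refine ⟨Finset.insert_subset (by simp) (hup _ hJ.1.1), OShat.up_both hJ.1.2 hJ.2.2⟩
    refine le_trans ?_ (Finset.card_le_card hsub)
    rw [Finset.card_union_of_disjoint, Finset.card_image_of_injective _ up_injective,
      Finset.card_image_of_injective, Finset.card_union_add_card_inter, hcard]
    · exact add_le_add (ih A0 a2) (ih A1 b2)
    · intro J J' h
      apply up_injective
      have := congrArg (fun s => Finset.erase s 0) h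
      simpa [Finset.erase_insert (zero_not_mem_up _)] using this
    · rw [Finset.disjoint_left]
      intro K hK hK'
      obtain ⟨J, _, rfl⟩ := Finset.mem_image.1 hK
      obtain ⟨J', _, h⟩ := Finset.mem_image.1 hK'
      exact zero_not_mem_up J (h ▸ Finset.mem_insert_self _ _)

lemma exists_OShat (A : Finset ℕ) (n : ℕ) (hA : ∀ a ∈ A, a < 2 ^ n) (z : ℝ) (hz : 0 < z) (hz1 : z ≤ 1)
    (t : ℕ) (hcard : (1 + z) ^ n < A.card * z ^ t) :
    ∃ J ⊆ Finset.range n, OShat (A : Set ℕ) J ∧ t < J.card := by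
  classical
  by_contra hcon
  push Not at hcon
  have h1 := card_le_OShat n A hA
  set S := ((Finset.range n).powerset.filter (fun J => OShat (A : Set ℕ) J)) with hS
  have h2 : (S.card : ℝ) * z ^ t ≤ ∑ J ∈ S, z ^ J.card := by
    rw [← nsmul_eq_mul]
    apply Finset.card_nsmul_le_sum
    intro J hJ
    simp only [hS, Finset.mem_filter, Finset.mem_powerset] at hJ
    exact pow_le_pow_of_le_one hz.le hz1 (hcon J hJ.1 hJ.2)
  have h3 : ∑ J ∈ S, z ^ J.card ≤ ∑ J ∈ (Finset.range n).powerset, z ^ J.card :=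
    Finset.sum_le_sum_of_subset_of_nonneg (Finset.filter_subset _ _) (fun _ _ _ => by positivity)
  have h4 : ∑ J ∈ (Finset.range n).powerset, z ^ J.card = (1 + z) ^ n := by
    have := Finset.sum_pow_mul_eq_add_pow z 1 (Finset.range n)
    simp only [one_pow, mul_one, Finset.card_range] at this
    rw [this, add_comm]
  have h5 : (A.card : ℝ) * z ^ t ≤ S.card * z ^ t := by gcongr
  linarith

/-- length-n binary words of points of F -/
def words (F : Set ℝ) (n : ℕ) : Set ℕ := (fun x : ℝ => ⌊2 ^ n * x⌋₊) '' F

lemma floor_lt {x : ℝ} (h : x ∈ Ico (0:ℝ) 1) (n : ℕ) : ⌊2 ^ n * x⌋₊ < 2 ^ n := by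
  rw [Nat.floor_lt (mul_nonneg (by positivity) h.1)]
  push_cast
  have : (0:ℝ) < 2 ^ n := by positivity
  nlinarith [h.2]

lemma fract_mem (x : ℝ) : Int.fract x ∈ Ico (0:ℝ) 1 := ⟨Int.fract_nonneg x, Int.fract_lt_one x⟩

lemma exists_nat_fract {x : ℝ} (h : 0 ≤ x) : x = Int.fract x + (⌊x⌋₊ : ℕ) := by
  rw [natCast_floor_eq_intCast_floor h, Int.fract_add_floor]

lemma floor_split {x : ℝ} (h : 0 ≤ x) (p q : ℕ) :
    ⌊2 ^ (p + q) * x⌋₊ = 2 ^ q * ⌊2 ^ p * x⌋₊ + ⌊2 ^ q * Int.fract (2 ^ p * x)⌋₊ := by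
  have h1 : (0:ℝ) ≤ 2 ^ p * x := by positivity
  have h2 := exists_nat_fract h1
  have h3 : (2:ℝ) ^ (p + q) * x = 2 ^ q * Int.fract (2 ^ p * x) + ((2 ^ q * ⌊2 ^ p * x⌋₊ : ℕ) : ℝ) := by
    push_cast
    rw [← mul_add, ← h2]; ring
  rw [h3, Nat.floor_add_natCast (mul_nonneg (by positivity) (Int.fract_nonneg _)), add_comm]

lemma floor_shift {x : ℝ} (h : 0 ≤ x) (r m s : ℕ) :
    ⌊2 ^ (r + m + s) * x⌋₊ / 2 ^ s % 2 ^ m = ⌊2 ^ m * Int.fract (2 ^ r * x)⌋₊ := by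
  rw [floor_split h, Nat.mul_add_div (by positivity), Nat.div_eq_of_lt (floor_lt (fract_mem _) _),
    add_zero, floor_split h, Nat.mul_add_mod, Nat.mod_eq_of_lt (floor_lt (fract_mem _) _)]

lemma floor_sum {x y : ℝ} (hx : 0 ≤ x) (hy : 0 ≤ y) (m : ℕ) :
    ∃ c ≤ 1, ⌊2 ^ m * Int.fract (x + y)⌋₊ ≡ ⌊2 ^ m * x⌋₊ + ⌊2 ^ m * y⌋₊ + c [MOD 2 ^ m] := by
  have h2 := floor_split (add_nonneg hx hy) 0 m
  simp only [zero_add, pow_zero, one_mul] at h2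
  have hx' : (0:ℝ) ≤ 2 ^ m * x := by positivity
  have hy' : (0:ℝ) ≤ 2 ^ m * y := by positivity
  have h3 : ⌊2 ^ m * x⌋₊ + ⌊2 ^ m * y⌋₊ ≤ ⌊2 ^ m * (x + y)⌋₊ := by
    apply Nat.le_floor
    push_cast
    linarith [Nat.floor_le hx', Nat.floor_le hy']
  have h4 : ⌊2 ^ m * (x + y)⌋₊ < ⌊2 ^ m * x⌋₊ + ⌊2 ^ m * y⌋₊ + 2 := by
    rw [Nat.floor_lt (by positivity)]
    push_cast
    linarith [Nat.lt_floor_add_one (2 ^ m * x), Nat.lt_floor_add_one (2 ^ m * y)]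
  refine ⟨⌊2 ^ m * (x + y)⌋₊ - (⌊2 ^ m * x⌋₊ + ⌊2 ^ m * y⌋₊), by omega, ?_⟩
  rw [Nat.add_sub_cancel' h3, h2]
  unfold Nat.ModEq
  rw [Nat.mul_add_mod]

lemma fract_iter {F : Set ℝ} (hinv : ∀ x ∈ F, Int.fract (2 * x) ∈ F)
    (hsub : F ⊆ Ico (0:ℝ) 1) {x : ℝ} (hx : x ∈ F) (r : ℕ) : Int.fract (2 ^ r * x) ∈ F := by
  induction r with
  | zero => simpa [Int.fract_eq_self.2 (hsub hx)] using hx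
  | succ r ih =>
    have h := hinv _ ih
    have : Int.fract (2 * Int.fract (2 ^ r * x)) = Int.fract (2 ^ (r+1) * x) := by
      rw [Int.fract_eq_fract]
      refine ⟨-2 * ⌊2 ^ r * x⌋, ?_⟩
      push_cast
      rw [Int.fract, pow_succ]; ring
    rwa [this] at h

lemma words_finite {F : Set ℝ} (hsub : F ⊆ Ico (0:ℝ) 1) (n : ℕ) : (words F n).Finite := by
  apply (Set.finite_Iio (2 ^ n)).subset
  rintro _ ⟨x, hx, rfl⟩
  exact floor_lt (hsub hx) n

/-- k-fold sums -/
def sums (A : Set ℕ) : ℕ → Set ℕ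
  | 0 => A
  | k + 1 => {c | ∃ a ∈ sums A k, ∃ b ∈ A, c = a + b}

def idx (W : ℕ → ℕ → ℕ) (i : ℕ) : ℕ → ℕ
  | 0 => i
  | k + 1 => W (idx W i k) i

lemma sums_words (F : ℕ → Set ℝ) (hsub : ∀ i, F i ⊆ Set.Ico (0 : ℝ) 1) (W : ℕ → ℕ → ℕ)
    (hadd : ∀ i j, ∀ x ∈ F i, ∀ y ∈ F j, Int.fract (x + y) ∈ F (W i j)) (i m k : ℕ) :
    ∀ b ∈ sums (words (F i) m) k, ∃ w ∈ words (F (idx W i k)) m, ∃ c ≤ k,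
      w ≡ b + c [MOD 2 ^ m] := by
  induction k with
  | zero => intro b hb; exact ⟨b, hb, 0, le_rfl, rfl⟩
  | succ k ih =>
    rintro _ ⟨a, ha, b, ⟨y, hy, rfl⟩, rfl⟩
    obtain ⟨_, ⟨x, hx, rfl⟩, c, hc, h⟩ := ih a ha
    obtain ⟨c', hc', h'⟩ := floor_sum (hsub _ hx).1 (hsub _ hy).1 m
    refine ⟨_, ⟨_, hadd _ _ x hx y hy, rfl⟩, c + c', by omega, h'.trans ?_⟩
    have := (h.add_right ⌊2 ^ m * y⌋₊).add_right c'
    refine this.trans ?_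
    apply Eq.subst (motive := fun z => _ ≡ z [MOD 2 ^ m]) _ rfl
    beta_reduce
    ring

lemma words_card_of_OShat (F : ℕ → Set ℝ) (hsub : ∀ i, F i ⊆ Set.Ico (0 : ℝ) 1) (W : ℕ → ℕ → ℕ)
    (hadd : ∀ i j, ∀ x ∈ F i, ∀ y ∈ F j, Int.fract (x + y) ∈ F (W i j)) (i m k : ℕ)
    {J : Finset ℕ} (hJ : J ⊆ Finset.range m) (h : OShat (sums (words (F i) m) k) J) :
    2 ^ J.card ≤ (k + 1) * (words (F (idx W i k)) m).ncard := by
  classical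
  have hfin := words_finite (hsub (idx W i k)) m
  have h1 := h.card_le hJ ((hfin.toFinset ×ˢ Finset.range (k+1)).image
    (fun p => (p.1 + (2 ^ m - 1) * p.2) % 2 ^ m)) (by
      intro b hb
      obtain ⟨w, hw, c, hc, hm⟩ := sums_words F hsub W hadd i m k b hb
      refine Finset.mem_image.2 ⟨(w, c), ?_, ?_⟩
      · simp only [Finset.mem_product, Set.Finite.mem_toFinset, Finset.mem_range]
        exact ⟨hw, by omega⟩
      · have h5 := hm.add_right ((2 ^ m - 1) * c)
        refine h5.trans ?_
        have h6 : b + c + (2 ^ m - 1) * c = b + 2 ^ m * c := by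
          have : 2 ^ m = (2 ^ m - 1) + 1 := by have := Nat.two_pow_pos m; omega
          rw [this]; simp only [Nat.add_sub_cancel]; ring
        rw [h6]; simp [Nat.ModEq])
  refine h1.trans (Finset.card_image_le.trans ?_)
  rw [Finset.card_product, Finset.card_range, mul_comm, Set.ncard_eq_toFinset_card _ hfin]

/-- Greedy covering step: some translate of J covers a fixed proportion of U. -/
lemma exists_translate (J U : Finset ℕ) (n m : ℕ) (hmn : m ≤ n) (hn : 0 < n) (hm : 0 < m)
    (hJ : J ⊆ Finset.range n)
    (hU : U ⊆ Finset.range m) :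
    ∃ s ≤ n - m, ((J.card : ℝ) - m) * U.card ≤ n * (U.filter (fun b => b + s ∈ J)).card := by
  by_contra hcon
  push Not at hcon
  have h1 : ∑ s ∈ Finset.range (n - m + 1), (U.filter (fun b => b + s ∈ J)).card
      = ∑ b ∈ U, ((Finset.range (n - m + 1)).filter (fun s => b + s ∈ J)).card := by
    simp only [Finset.card_filter]
    exact Finset.sum_comm
  have h2 : ∀ b ∈ U, J.card ≤ ((Finset.range (n - m + 1)).filter (fun s => b + s ∈ J)).card + m := by
    intro b hb
    have hbm := Finset.mem_range.1 (hU hb)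
    have h3 : J ⊆ ((Finset.range (n - m + 1)).filter (fun s => b + s ∈ J)).image (fun s => b + s) ∪
        (Finset.range b ∪ Finset.Ico (n - m + 1 + b) n) := by
      intro j hj
      have hjn := Finset.mem_range.1 (hJ hj)
      simp only [Finset.mem_union, Finset.mem_image, Finset.mem_filter, Finset.mem_range, Finset.mem_Ico]
      by_cases h4 : j < b
      · right; left; exact h4
      by_cases h5 : n - m + 1 + b ≤ j
      · right; right; exact ⟨h5, hjn⟩
      left
      refine ⟨j - b, ⟨by omega, ?_⟩, by omega⟩
      rwa [Nat.add_sub_cancel' (by omega)]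
    have h4 := (Finset.card_le_card h3).trans (Finset.card_union_le _ _)
    have h5 := Finset.card_union_le (Finset.range b) (Finset.Ico (n - m + 1 + b) n)
    have h6 : (((Finset.range (n - m + 1)).filter (fun s => b + s ∈ J)).image (fun s => b + s)).card ≤ _ :=
      Finset.card_image_le
    simp only [Finset.card_range, Nat.card_Ico] at h5
    omega
  have h3 : ((J.card : ℝ) - m) * U.card ≤
      ∑ s ∈ Finset.range (n - m + 1), ((U.filter (fun b => b + s ∈ J)).card : ℝ) := by
    have h4 : (∑ s ∈ Finset.range (n - m + 1), ((U.filter (fun b => b + s ∈ J)).card : ℝ)) =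
      ∑ b ∈ U, (((Finset.range (n - m + 1)).filter (fun s => b + s ∈ J)).card : ℝ) := by
      exact_mod_cast h1
    rw [h4, mul_comm, ← nsmul_eq_mul]
    apply Finset.card_nsmul_le_sum
    intro b hb
    have : (J.card : ℝ) ≤ ((Finset.range (n - m + 1)).filter (fun s => b + s ∈ J)).card + m := by
      exact_mod_cast h2 b hb
    linarith
  have hn' : (0:ℝ) < n := by exact_mod_cast hn
  have h4 : n * ∑ s ∈ Finset.range (n - m + 1), ((U.filter (fun b => b + s ∈ J)).card : ℝ) <
      ∑ s ∈ Finset.range (n - m + 1), ((J.card : ℝ) - m) * U.card := by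
    rw [Finset.mul_sum]
    apply Finset.sum_lt_sum_of_nonempty (by simp)
    intro s hs
    exact hcon s (by simp at hs; omega)
  rw [Finset.sum_const, Finset.card_range, nsmul_eq_mul] at h4
  have h5 : ((n - m + 1 : ℕ) : ℝ) ≤ n := by exact_mod_cast (by omega : n - m + 1 ≤ n)
  have h6 : 0 ≤ ((J.card : ℝ) - m) * U.card := by
    have := hcon 0 (by omega)
    exact le_trans (by positivity) this.le
  nlinarith

lemma greedy {A B : Set ℕ} {J : Finset ℕ} {n m : ℕ} (hmn : m ≤ n) (hm : 0 < m)
    (hJ : J ⊆ Finset.range n) (hA : OShat A J) (hB : B.Nonempty) {c : ℝ}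
    (hc : c * n ≤ J.card - m)
    (hAB : ∀ a ∈ A, ∀ s ≤ n - m, a / 2 ^ s % 2 ^ m ∈ B) (k : ℕ) :
    ∃ K ⊆ Finset.range m, OShat (sums B k) K ∧ (m : ℝ) - K.card ≤ (1 - c) ^ k * m := by
  induction k with
  | zero => exact ⟨∅, by simp, OShat.empty hB.some_mem, by simp⟩
  | succ k ih =>
    obtain ⟨K, hK, hS, hcard⟩ := ih
    have hn : (0:ℝ) < n := by exact_mod_cast (by omega : 0 < n)
    obtain ⟨s, hs, h⟩ := exists_translate J (Finset.range m \ K) n m hmn (by omega) hm hJ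
      Finset.sdiff_subset
    set L := (Finset.range m \ K).filter (fun b => b + s ∈ J) with hL
    have hd : Disjoint K L := by
      rw [Finset.disjoint_right]
      intro b hb
      simp only [hL, Finset.mem_filter, Finset.mem_sdiff] at hb
      exact hb.1.2
    have hLs : OShat B L := by
      refine (hA.shift s m (B := B) (fun a ha => hAB a ha s hs)).subset ?_
      intro b hb
      simp only [hL, Finset.mem_filter, Finset.mem_sdiff] at hb ⊢
      exact ⟨hb.1.1, hb.2⟩
    refine ⟨K ∪ L, Finset.union_subset hK ?_, hS.add hLs hd, ?_⟩
    · exact (Finset.filter_subset _ _).trans Finset.sdiff_subset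
    · rw [Finset.card_union_of_disjoint hd]
      have hU : ((Finset.range m \ K).card : ℝ) = m - K.card := by
        rw [Finset.card_sdiff_of_subset hK, Finset.card_range, Nat.cast_sub]
        simpa using Finset.card_le_card hK
      rw [hU] at h
      have hU0 : (0:ℝ) ≤ m - K.card := hU ▸ Nat.cast_nonneg _
      have h2 : c * n * (m - K.card) ≤ n * L.card :=
        (mul_le_mul_of_nonneg_right hc hU0).trans h
      have h3 : c * (m - K.card) ≤ L.card := by
        by_contra hh
        push Not at hh
        nlinarith
      have hc1 : 0 ≤ 1 - c := by
        have : (J.card : ℝ) ≤ n := by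
          have := Finset.card_le_card hJ
          rw [Finset.card_range] at this
          exact_mod_cast this
        have hm' : (0:ℝ) < m := by exact_mod_cast hm
        by_contra hh
        push Not at hh
        nlinarith
      push_cast
      rw [pow_succ]
      nlinarith [mul_le_mul_of_nonneg_left hcard hc1]

lemma growth (F : ℕ → Set ℝ) (hsub : ∀ i, F i ⊆ Set.Ico (0 : ℝ) 1)
    (hinv : ∀ i, ∀ x ∈ F i, Int.fract (2 * x) ∈ F i) (W : ℕ → ℕ → ℕ)
    (hadd : ∀ i j, ∀ x ∈ F i, ∀ y ∈ F j, Int.fract (x + y) ∈ F (W i j)) (i : ℕ)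
    (δ : ℝ) (hδ : 0 < δ)
    (hN : ∀ᶠ n : ℕ in atTop, (2:ℝ) ^ (δ * n) < (words (F i) n).ncard) :
    ∃ c : ℝ, 0 < c ∧ c ≤ 1 ∧ ∀ k : ℕ, ∀ᶠ m : ℕ in atTop,
      (2:ℝ) ^ ((1 - (1 - c) ^ k) * m) ≤ (k + 1) * (words (F (idx W i k)) m).ncard := by
  set z : ℝ := min 1 ((2:ℝ) ^ (δ / 2) - 1) with hz
  have hz0 : 0 < z := by
    apply lt_min one_pos
    have := Real.one_lt_rpow (x := 2) (by norm_num) (half_pos hδ)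
    linarith
  have hz1 : z ≤ 1 := min_le_left _ _
  have hz2 : 1 + z ≤ (2:ℝ) ^ (δ / 2) := by
    have := min_le_right 1 ((2:ℝ) ^ (δ / 2) - 1)
    linarith
  obtain ⟨q, hq⟩ : ∃ q : ℕ, ((2:ℝ) ^ (-(δ / 2))) ^ q < z := by
    apply exists_pow_lt_of_lt_one hz0
    apply Real.rpow_lt_one_of_one_lt_of_neg (by norm_num) (by linarith)
  have hq0 : 0 < q := by
    rcases Nat.eq_zero_or_pos q with rfl | h
    · simp at hq; linarith
    · exact h
  have hqR : (1:ℝ) ≤ q := by exact_mod_cast hq0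
  refine ⟨1 / (2 * q), by positivity, ?_, fun k => ?_⟩
  · rw [div_le_one (by positivity)]; linarith
  have htend : Tendsto (fun m : ℕ => 2 * q * m) atTop atTop :=
    tendsto_id.const_mul_atTop' (by positivity)
  filter_upwards [htend.eventually hN, eventually_gt_atTop 0] with m hm hm0
  set n := 2 * q * m with hn
  have hfin := words_finite (hsub i) n
  have hmn : m ≤ n := by rw [hn]; nlinarith
  obtain ⟨J, hJ, hS, hcard⟩ := exists_OShat hfin.toFinset n (by
      intro a ha
      obtain ⟨x, hx, rfl⟩ := (Set.Finite.mem_toFinset _).1 ha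
      exact floor_lt (hsub i hx) n) z hz0 hz1 (2 * m) (by
      rw [← Set.ncard_eq_toFinset_card _ hfin]
      have h1 : (1 + z) ^ n ≤ (2:ℝ) ^ (δ / 2 * n) := by
        rw [Real.rpow_mul (by norm_num), Real.rpow_natCast]
        gcongr
      have h2 : (2:ℝ) ^ (-(δ / 2) * n) ≤ z ^ (2 * m) := by
        rw [Real.rpow_mul (by norm_num), Real.rpow_natCast]
        have : n = q * (2 * m) := by rw [hn]; ring
        rw [this, pow_mul]
        gcongr
      have h3 : (2:ℝ) ^ (δ / 2 * n) = (2:ℝ) ^ (δ * n) * (2:ℝ) ^ (-(δ / 2) * n) := by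
        rw [← Real.rpow_add (by norm_num)]; congr 1; ring
      calc (1 + z) ^ n ≤ (2:ℝ) ^ (δ * n) * (2:ℝ) ^ (-(δ / 2) * n) := h3 ▸ h1
        _ < _ * (2:ℝ) ^ (-(δ / 2) * n) := by
            apply mul_lt_mul_of_pos_right hm (by positivity)
        _ ≤ _ := by gcongr)
  rw [Set.Finite.coe_toFinset] at hS
  have hne : (words (F i) m).Nonempty := by
    have : (words (F i) n).Nonempty := by
      obtain ⟨f, f1, _⟩ := hS
      exact ⟨_, f1 (fun _ => true)⟩
    obtain ⟨_, x, hx, _⟩ := this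
    exact ⟨_, x, hx, rfl⟩
  obtain ⟨K, hK, hKS, hKc⟩ := greedy (c := 1 / (2 * q)) (B := words (F i) m) hmn hm0 hJ hS hne (by
      have : (2 * m : ℝ) < J.card := by exact_mod_cast hcard
      have h2 : 1 / (2 * (q:ℝ)) * n = m := by
        rw [hn]; push_cast; field_simp
      rw [h2]; linarith) (by
      rintro _ ⟨x, hx, rfl⟩ s hs
      have : n = (n - m - s) + m + s := by omega
      beta_reduce
      rw [this, floor_shift (hsub i hx).1]
      exact ⟨_, fract_iter (hinv i) (hsub i) hx _, rfl⟩) k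
  have h1 := words_card_of_OShat F hsub W hadd i m k hK hKS
  have h2 : (2:ℝ) ^ K.card ≤ (k + 1) * (words (F (idx W i k)) m).ncard := by exact_mod_cast h1
  refine le_trans ?_ h2
  rw [← Real.rpow_natCast 2 K.card]
  apply Real.rpow_le_rpow_of_exponent_le (by norm_num)
  linarith

lemma words_lower {F : Set ℝ} (hsub : F ⊆ Ico (0:ℝ) 1) (d : NNReal) (hd : (d : ENNReal) < dimH F) :
    ∀ᶠ n : ℕ in atTop, (2:ℝ) ^ ((d:ℝ) * n) < (words F n).ncard := by
  by_contra hcon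
  have hfr : ∃ᶠ n : ℕ in atTop, ((words F n).ncard : ℝ) ≤ (2:ℝ) ^ ((d:ℝ) * n) := by
    simpa [Filter.Frequently] using hcon
  have htop := hausdorffMeasure_of_lt_dimH hd
  set l := (atTop : Filter ℕ) ⊓ 𝓟 {n | ((words F n).ncard : ℝ) ≤ (2:ℝ) ^ ((d:ℝ) * n)} with hl
  have hlne : l.NeBot := Filter.frequently_mem_iff_neBot.1 hfr
  have hdiam : ∀ n w : ℕ, Metric.ediam {x ∈ F | ⌊2 ^ n * x⌋₊ = w} ≤ ENNReal.ofReal ((1/2) ^ n) := by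
    intro n w
    apply Metric.ediam_le
    rintro x ⟨hx, hxw⟩ y ⟨hy, hyw⟩
    rw [edist_dist]
    apply ENNReal.ofReal_le_ofReal
    have hp : (0:ℝ) < 2 ^ n := by positivity
    have hx1 := Nat.floor_le (mul_nonneg hp.le (hsub hx).1)
    have hx2 := Nat.lt_floor_add_one (2 ^ n * x)
    have hy1 := Nat.floor_le (mul_nonneg hp.le (hsub hy).1)
    have hy2 := Nat.lt_floor_add_one (2 ^ n * y)
    rw [hxw] at hx1 hx2
    rw [hyw] at hy1 hy2
    rw [Real.dist_eq, one_div, inv_pow, ← one_div, le_div_iff₀ hp, ← abs_of_pos hp, ← abs_mul, abs_le]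
    constructor <;> nlinarith
  have key := Measure.hausdorffMeasure_le_liminf_sum (X := ℝ) (β := ℕ)
    (ι := fun n => (words_finite hsub n).toFinset) (d : ℝ) F (l := l)
    (fun n => ENNReal.ofReal ((1/2) ^ n)) (by
      have h1 : Tendsto (fun n : ℕ => ((1:ℝ)/2) ^ n) atTop (nhds 0) :=
        tendsto_pow_atTop_nhds_zero_of_lt_one (by norm_num) (by norm_num)
      have h2 := (ENNReal.continuous_ofReal.tendsto 0).comp h1
      rw [ENNReal.ofReal_zero] at h2
      exact h2.mono_left inf_le_left)
    (fun n w => {x ∈ F | ⌊2 ^ n * x⌋₊ = (w : ℕ)})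
    (Eventually.of_forall fun n w => hdiam n w)
    (Eventually.of_forall fun n x hx => by
      refine mem_iUnion.2 ⟨⟨⌊2 ^ n * x⌋₊, ?_⟩, hx, rfl⟩
      rw [Set.Finite.mem_toFinset]
      exact ⟨x, hx, rfl⟩)
  rw [htop] at key
  have hle : liminf (fun n => ∑ w : (words_finite hsub n).toFinset,
      Metric.ediam {x ∈ F | ⌊2 ^ n * x⌋₊ = (w : ℕ)} ^ (d:ℝ)) l ≤ 1 := by
    apply Filter.liminf_le_of_frequently_le'
    apply Eventually.frequently
    have hev : ∀ᶠ n in l, ((words F n).ncard : ℝ) ≤ (2:ℝ) ^ ((d:ℝ) * n) :=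
      Filter.mem_inf_of_right (mem_principal_self _)
    filter_upwards [hev] with n hn
    calc ∑ w : (words_finite hsub n).toFinset, Metric.ediam {x ∈ F | ⌊2 ^ n * x⌋₊ = (w : ℕ)} ^ (d:ℝ)
        ≤ ∑ w : (words_finite hsub n).toFinset, ENNReal.ofReal ((1/2) ^ n) ^ (d:ℝ) := by
          apply Finset.sum_le_sum
          intro w _
          exact ENNReal.rpow_le_rpow (hdiam n w) d.2
      _ = ENNReal.ofReal ((words F n).ncard * ((1/2) ^ n) ^ (d:ℝ)) := by
          rw [Finset.sum_const, Finset.card_univ, Fintype.card_coe,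
            ← Set.ncard_eq_toFinset_card _ (words_finite hsub n), nsmul_eq_mul,
            ENNReal.ofReal_rpow_of_nonneg (by positivity) d.coe_nonneg, ENNReal.ofReal_mul (by positivity),
            ENNReal.ofReal_natCast]
      _ ≤ ENNReal.ofReal 1 := by
          apply ENNReal.ofReal_le_ofReal
          have h1 : (((1:ℝ)/2) ^ n) ^ (d:ℝ) = (2:ℝ) ^ (-((d:ℝ) * n)) := by
            rw [Real.rpow_neg (by norm_num), mul_comm, Real.rpow_mul (by norm_num),
              Real.rpow_natCast, one_div, inv_pow, Real.inv_rpow (by positivity)]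
          rw [h1]
          calc _ ≤ (2:ℝ) ^ ((d:ℝ) * n) * (2:ℝ) ^ (-((d:ℝ) * n)) := by gcongr
            _ = 1 := by rw [← Real.rpow_add (by norm_num)]; simp
      _ = 1 := ENNReal.ofReal_one
  exact absurd (key.trans hle) (by simp)

lemma exists_cover {G C : Set ℝ} (hC : IsClosed C) (hG : G = C ∩ Ico (0:ℝ) 1) (s : NNReal)
    (hs1 : s ≤ 1) (hs : dimH G < s) :
    ∃ (T : Finset ℕ) (x : ℕ → ℝ) (p : ℕ → ℕ), (∀ l ∈ T, 1 ≤ p l) ∧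
      (∀ y ∈ G, ∃ l ∈ T, |y - x l| < (1/2) ^ (p l)) ∧
      ∑ l ∈ T, 3 * (2:ℝ) ^ (-((s:ℝ) * p l)) ≤ 1 := by
  have hs0 : (0:ℝ) < s := by
    have : (0:ENNReal) < s := lt_of_le_of_lt (zero_le) hs
    exact_mod_cast this
  have hs1' : (s:ℝ) ≤ 1 := by exact_mod_cast hs1
  set K : Set ℝ := G ∪ {1} with hK
  have hKc : IsCompact K := by
    have : K = Icc 0 1 ∩ (C ∪ {1}) := by
      ext y
      simp only [hK, hG, mem_union, mem_inter_iff, mem_Ico, mem_Icc, mem_singleton_iff]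
      constructor
      · rintro (⟨h1, h2, h3⟩ | rfl)
        · exact ⟨⟨h2, h3.le⟩, Or.inl h1⟩
        · simp
      · rintro ⟨⟨h1, h2⟩, h3 | h3⟩
        · rcases h2.lt_or_eq with h | h
          · exact Or.inl ⟨h3, h1, h⟩
          · exact Or.inr h
        · exact Or.inr h3
    rw [this]
    exact isCompact_Icc.inter_right (hC.union isClosed_singleton)
  have hKd : dimH K < s := by
    rw [hK, dimH_union, dimH_singleton]
    exact max_lt hs (by exact_mod_cast hs0)
  have hz := hausdorffMeasure_of_dimH_lt hKd
  rw [Measure.hausdorffMeasure_apply] at hz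
  have hη : (0:ENNReal) < ENNReal.ofReal (1/24) := by simp
  have hinf := (ENNReal.iSup_eq_zero.1 (ENNReal.iSup_eq_zero.1 hz 1) one_pos).trans_lt hη
  simp only [iInf_lt_iff] at hinf
  obtain ⟨t, hcov, -, hsum⟩ := hinf
  obtain ⟨ε, hε0, hε⟩ := ENNReal.exists_pos_sum_of_countable hη.ne' ℕ
  set a : ℕ → ENNReal := fun n => (⨆ _ : (t n).Nonempty, Metric.ediam (t n) ^ (s:ℝ)) + ε n with ha
  have hatot : ∑' n, a n ≤ ENNReal.ofReal (1/12) := by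
    rw [ha, ENNReal.tsum_add]
    refine (add_le_add hsum.le hε.le).trans ?_
    rw [← ENNReal.ofReal_add (by norm_num) (by norm_num)]
    norm_num
  have hale : ∀ n, a n ≤ ENNReal.ofReal (1/12) := fun n => (ENNReal.le_tsum n).trans hatot
  have hatop : ∀ n, a n ≠ ⊤ := fun n => ((hale n).trans_lt ENNReal.ofReal_lt_top).ne
  have ha0 : ∀ n, 0 < (a n).toReal := by
    intro n
    apply ENNReal.toReal_pos _ (hatop n)
    simp only [ha]
    have : (ε n : ENNReal) ≠ 0 := by exact_mod_cast (hε0 n).ne'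
    simp [(hε0 n).ne']
  have ha1 : ∀ n, (a n).toReal ≤ 1 := by
    intro n
    have := ENNReal.toReal_mono ENNReal.ofReal_ne_top (hale n)
    rw [ENNReal.toReal_ofReal (by norm_num)] at this
    linarith
  set e : ℕ → ℝ := fun n => (a n).toReal ^ (1 / (s:ℝ)) with he
  have he0 : ∀ n, 0 < e n := fun n => Real.rpow_pos_of_pos (ha0 n) _
  have he1 : ∀ n, e n ≤ 1 := fun n => Real.rpow_le_one (ha0 n).le (ha1 n) (by positivity)
  have hes : ∀ n, e n ^ (s:ℝ) = (a n).toReal := by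
    intro n
    rw [he]
    beta_reduce
    rw [← Real.rpow_mul (ha0 n).le, one_div, inv_mul_cancel₀ hs0.ne', Real.rpow_one]
  have hball : ∀ n, ∃ x, t n ⊆ Metric.ball x (e n) := by
    intro n
    rcases (t n).eq_empty_or_nonempty with h | ⟨x, hx⟩
    · exact ⟨0, by simp [h]⟩
    · refine ⟨x, fun y hy => ?_⟩
      rw [Metric.mem_ball]
      have h1 : edist y x ^ (s:ℝ) < a n := by
        have hne : (t n).Nonempty := ⟨x, hx⟩
        have h2 : edist y x ^ (s:ℝ) ≤ ⨆ _ : (t n).Nonempty, Metric.ediam (t n) ^ (s:ℝ) := by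
          rw [ciSup_pos hne]
          exact ENNReal.rpow_le_rpow (Metric.edist_le_ediam_of_mem hy hx) hs0.le
        refine h2.trans_lt ?_
        simp only [ha]
        apply ENNReal.lt_add_right
        · exact ne_top_of_le_ne_top (hatop n) le_self_add
        · exact_mod_cast (hε0 n).ne'
      rw [edist_dist, ENNReal.ofReal_rpow_of_nonneg dist_nonneg hs0.le,
        ENNReal.ofReal_lt_iff_lt_toReal (by positivity) (hatop n), ← hes n] at h1
      exact (Real.rpow_lt_rpow_iff dist_nonneg (he0 n).le hs0).1 h1
  choose x hx using hball
  obtain ⟨T, hT⟩ := hKc.elim_finite_subcover (fun n => Metric.ball (x n) (e n))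
    (fun n => Metric.isOpen_ball) (hcov.trans (iUnion_mono hx))
  have hp : ∀ n, ∃ p : ℕ, ((1:ℝ)/2) ^ (p + 1) < e n ∧ e n ≤ (1/2) ^ p := fun n =>
    exists_nat_pow_near_of_lt_one (he0 n) (he1 n) (by norm_num) (by norm_num)
  choose p hp1 hp2 using hp
  have hterm : ∀ n, 3 * (2:ℝ) ^ (-((s:ℝ) * p n)) ≤ 6 * (a n).toReal := by
    intro n
    have h1 : (((1:ℝ)/2) ^ (p n + 1)) ^ (s:ℝ) ≤ (a n).toReal := by
      rw [← hes]
      exact Real.rpow_le_rpow (by positivity) (hp1 n).le hs0.le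
    have h2 : (((1:ℝ)/2) ^ (p n + 1)) ^ (s:ℝ) = (2:ℝ) ^ (-((s:ℝ) * p n)) * (2:ℝ) ^ (-(s:ℝ)) := by
      rw [← Real.rpow_add (by norm_num), one_div, inv_pow, Real.inv_rpow (by positivity),
        ← Real.rpow_natCast, ← Real.rpow_mul (by norm_num), ← Real.rpow_neg (by norm_num)]
      congr 1; push_cast; ring
    have h3 : (1:ℝ)/2 ≤ (2:ℝ) ^ (-(s:ℝ)) := by
      have : (2:ℝ) ^ (-1:ℝ) ≤ (2:ℝ) ^ (-(s:ℝ)) :=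
        Real.rpow_le_rpow_of_exponent_le (by norm_num) (by linarith)
      rw [Real.rpow_neg_one] at this
      linarith
    have h4 : (0:ℝ) < (2:ℝ) ^ (-((s:ℝ) * p n)) := by positivity
    nlinarith
  have hTsum : ∑ l ∈ T, 3 * (2:ℝ) ^ (-((s:ℝ) * p l)) ≤ 1 := by
    have h1 : ∑ l ∈ T, (a l).toReal ≤ 1/12 := by
      rw [← ENNReal.toReal_sum (fun l _ => hatop l)]
      have := ENNReal.toReal_mono ENNReal.ofReal_ne_top ((ENNReal.sum_le_tsum T).trans hatot)
      rwa [ENNReal.toReal_ofReal (by norm_num)] at this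
    calc _ ≤ ∑ l ∈ T, 6 * (a l).toReal := Finset.sum_le_sum fun l _ => hterm l
      _ = 6 * ∑ l ∈ T, (a l).toReal := by rw [Finset.mul_sum]
      _ ≤ 1 := by linarith
  refine ⟨T, x, p, ?_, ?_, hTsum⟩
  · intro l hl
    by_contra hlt
    have h0 : p l = 0 := by omega
    have h1 := Finset.single_le_sum (f := fun l => 3 * (2:ℝ) ^ (-((s:ℝ) * p l)))
      (fun i _ => by positivity) hl
    simp only [h0] at h1
    norm_num at h1
    linarith
  · intro y hy
    have := hT (Or.inl hy)
    simp only [mem_iUnion] at this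
    obtain ⟨l, hl, hyl⟩ := this
    refine ⟨l, hl, ?_⟩
    rw [Metric.mem_ball, Real.dist_eq] at hyl
    exact hyl.trans_le (hp2 l)

lemma words_rec {G : Set ℝ} (hsub : G ⊆ Ico (0:ℝ) 1) (hinv : ∀ x ∈ G, Int.fract (2 * x) ∈ G)
    (T : Finset ℕ) (x : ℕ → ℝ) (p : ℕ → ℕ)
    (hcov : ∀ y ∈ G, ∃ l ∈ T, |y - x l| < (1/2) ^ (p l)) (n : ℕ) (hn : ∀ l ∈ T, p l ≤ n) :
    (words G n).ncard ≤ ∑ l ∈ T, 3 * (words G (n - p l)).ncard := by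
  classical
  have hfin := fun n => words_finite hsub n
  have hsubset : (hfin n).toFinset ⊆ T.biUnion (fun l =>
      (((Finset.Icc (⌊2 ^ (p l) * x l⌋ - 1) (⌊2 ^ (p l) * x l⌋ + 1)).image Int.toNat) ×ˢ
        (hfin (n - p l)).toFinset).image (fun u => 2 ^ (n - p l) * u.1 + u.2)) := by
    intro w hw
    obtain ⟨y, hy, rfl⟩ := (Set.Finite.mem_toFinset _).1 hw
    obtain ⟨l, hl, hyl⟩ := hcov y hy
    refine Finset.mem_biUnion.2 ⟨l, hl, Finset.mem_image.2
      ⟨(⌊2 ^ (p l) * y⌋₊, ⌊2 ^ (n - p l) * Int.fract (2 ^ (p l) * y)⌋₊), ?_, ?_⟩⟩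
    · rw [Finset.mem_product]
      constructor
      · refine Finset.mem_image.2 ⟨⌊2 ^ (p l) * y⌋, ?_, ?_⟩
        · have hp : (0:ℝ) < 2 ^ (p l) := by positivity
          rw [one_div, inv_pow, ← one_div, lt_div_iff₀ hp, ← abs_of_pos hp, ← abs_mul, abs_lt] at hyl
          have h1 := Int.floor_le (2 ^ (p l) * y)
          have h2 := Int.lt_floor_add_one (2 ^ (p l) * y)
          have h3 := Int.floor_le (2 ^ (p l) * x l)
          have h4 := Int.lt_floor_add_one (2 ^ (p l) * x l)
          rw [Finset.mem_Icc]
          constructor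
          · have : (⌊2 ^ (p l) * x l⌋ : ℝ) < ⌊2 ^ (p l) * y⌋ + 2 := by nlinarith
            have : (⌊2 ^ (p l) * x l⌋) < ⌊2 ^ (p l) * y⌋ + 2 := by exact_mod_cast this
            omega
          · have : (⌊2 ^ (p l) * y⌋ : ℝ) < ⌊2 ^ (p l) * x l⌋ + 2 := by nlinarith
            have : (⌊2 ^ (p l) * y⌋) < ⌊2 ^ (p l) * x l⌋ + 2 := by exact_mod_cast this
            omega
        · exact Int.floor_toNat _
      · rw [Set.Finite.mem_toFinset]
        exact ⟨_, fract_iter hinv hsub hy _, rfl⟩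
    · have h := floor_split (hsub hy).1 (p l) (n - p l)
      rw [Nat.add_sub_cancel' (hn l hl)] at h
      exact h.symm
  rw [Set.ncard_eq_toFinset_card _ (hfin n)]
  refine (Finset.card_le_card hsubset).trans (Finset.card_biUnion_le.trans ?_)
  apply Finset.sum_le_sum
  intro l hl
  refine Finset.card_image_le.trans ?_
  rw [Finset.card_product, Set.ncard_eq_toFinset_card _ (hfin _)]
  gcongr
  refine Finset.card_image_le.trans ?_
  rw [Int.card_Icc]
  omega

lemma words_upper {G C : Set ℝ} (hC : IsClosed C) (hG : G = C ∩ Ico (0:ℝ) 1)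
    (hinv : ∀ x ∈ G, Int.fract (2 * x) ∈ G) (s : NNReal) (hs1 : s ≤ 1) (hs : dimH G < s) :
    ∃ c : ℝ, ∀ n : ℕ, ((words G n).ncard : ℝ) ≤ c * (2:ℝ) ^ ((s:ℝ) * n) := by
  have hsub : G ⊆ Ico (0:ℝ) 1 := hG ▸ inter_subset_right
  obtain ⟨T, x, p, hp, hcov, hsum⟩ := exists_cover hC hG s hs1 hs
  refine ⟨2 ^ (T.sup p), fun n => ?_⟩
  induction n using Nat.strong_induction_on with
  | _ n ih =>
    by_cases hn : ∀ l ∈ T, p l ≤ n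
    · have h1 := words_rec hsub hinv T x p hcov n hn
      have h2 : ((words G n).ncard : ℝ) ≤ ∑ l ∈ T, 3 * ((words G (n - p l)).ncard : ℝ) := by
        exact_mod_cast h1
      refine h2.trans ?_
      calc ∑ l ∈ T, 3 * ((words G (n - p l)).ncard : ℝ)
          ≤ ∑ l ∈ T, (2 ^ (T.sup p) * (2:ℝ) ^ ((s:ℝ) * n)) * (3 * (2:ℝ) ^ (-((s:ℝ) * p l))) := by
            apply Finset.sum_le_sum
            intro l hl
            have h3 := ih (n - p l) (by have := hp l hl; have := hn l hl; omega)
            have h4 : (2:ℝ) ^ ((s:ℝ) * (n - p l : ℕ)) =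
                (2:ℝ) ^ ((s:ℝ) * n) * (2:ℝ) ^ (-((s:ℝ) * p l)) := by
              rw [← Real.rpow_add (by norm_num), Nat.cast_sub (hn l hl)]; congr 1; ring
            rw [h4] at h3
            linarith
        _ = (2 ^ (T.sup p) * (2:ℝ) ^ ((s:ℝ) * n)) * ∑ l ∈ T, 3 * (2:ℝ) ^ (-((s:ℝ) * p l)) := by
            rw [Finset.mul_sum]
        _ ≤ _ := mul_le_of_le_one_right (by positivity) hsum
    · push Not at hn
      obtain ⟨l, hl, hln⟩ := hn
      have h1 : n ≤ T.sup p := hln.le.trans (Finset.le_sup hl)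
      have h2 : (words G n).ncard ≤ 2 ^ n := by
        have : words G n ⊆ (Finset.range (2 ^ n) : Set ℕ) := by
          rintro _ ⟨x, hx, rfl⟩
          simpa using floor_lt (hsub hx) n
        simpa [Set.ncard_coe_finset] using Set.ncard_le_ncard this (Finset.finite_toSet _)
      have h3 : ((words G n).ncard : ℝ) ≤ 2 ^ (T.sup p) := by
        have : (2:ℕ) ^ n ≤ 2 ^ (T.sup p) := Nat.pow_le_pow_right (by norm_num) h1
        exact_mod_cast h2.trans this
      refine h3.trans (le_mul_of_one_le_right (by positivity) ?_)
      exact Real.one_le_rpow (by norm_num) (by positivity)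

theorem stmt8 (E : Set ℝ) (F : ℕ → Set ℝ)
    (hEF : E = ⋃ i, F i)
    (hsub : ∀ i, F i ⊆ Set.Ico (0 : ℝ) 1)
    (hclosed : ∀ i, ∃ C : Set ℝ, IsClosed C ∧ F i = C ∩ Set.Ico (0 : ℝ) 1)
    (hinv : ∀ i, ∀ x ∈ F i, Int.fract (2 * x) ∈ F i)
    (W : ℕ → ℕ → ℕ)
    (hadd : ∀ i j, ∀ x ∈ F i, ∀ y ∈ F j, Int.fract (x + y) ∈ F (W i j))
    (hhalf : ∀ i, ∀ x ∈ F i, x / 2 ∈ F i) :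
    dimH E = 0 ∨ dimH E = 1 := by
  by_cases h0 : dimH E = 0
  · exact Or.inl h0
  right
  apply le_antisymm
  · exact (dimH_mono (subset_univ E)).trans Real.dimH_univ.le
  have hi : ∃ i, dimH (F i) ≠ 0 := by
    by_contra hcon
    push Not at hcon
    apply h0
    rw [hEF, dimH_iUnion]
    simp [hcon]
  obtain ⟨i, hi⟩ := hi
  obtain ⟨d, hd0, hd⟩ := ENNReal.lt_iff_exists_nnreal_btwn.1 (pos_iff_ne_zero.2 hi)
  have hd0' : (0:ℝ) < d := by exact_mod_cast hd0
  obtain ⟨c, hc0, hc1, hgrow⟩ := growth F hsub hinv W hadd i d hd0' (words_lower (hsub i) d hd)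
  by_contra hlt
  push Not at hlt
  obtain ⟨s, hs, hs1⟩ := ENNReal.lt_iff_exists_nnreal_btwn.1 hlt
  have hs1' : (s:ℝ) < 1 := by exact_mod_cast hs1
  obtain ⟨k, hk⟩ := exists_pow_lt_of_lt_one (sub_pos.2 hs1') (show 1 - c < 1 by linarith)
  obtain ⟨C, hC, hG⟩ := hclosed (idx W i k)
  have hdk : dimH (F (idx W i k)) < s :=
    (dimH_mono (hEF ▸ subset_iUnion F _)).trans_lt hs
  obtain ⟨c', hc'⟩ := words_upper hC hG (hinv _) s (by exact_mod_cast hs1.le) hdk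
  set θ : ℝ := 1 - (1 - c) ^ k - s with hθ
  have hθ0 : 0 < θ := by rw [hθ]; linarith
  have htend : Tendsto (fun m : ℕ => (2:ℝ) ^ (θ * m)) atTop atTop := by
    have h1 : (1:ℝ) < 2 ^ θ := Real.one_lt_rpow (by norm_num) hθ0
    have := tendsto_pow_atTop_atTop_of_one_lt h1
    refine this.congr fun m => ?_
    rw [Real.rpow_mul (by norm_num), Real.rpow_natCast]
  obtain ⟨m, hm1, hm2⟩ := ((hgrow k).and (htend.eventually_gt_atTop ((k + 1) * c'))).exists
  have h1 := hm1.trans (mul_le_mul_of_nonneg_left (hc' m) (by positivity : (0:ℝ) ≤ k + 1))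
  have h2 : (2:ℝ) ^ ((1 - (1 - c) ^ k) * m) = (2:ℝ) ^ (θ * m) * (2:ℝ) ^ ((s:ℝ) * m) := by
    rw [← Real.rpow_add (by norm_num)]; congr 1; rw [hθ]; ring
  rw [h2, ← mul_assoc] at h1
  exact absurd (le_of_mul_le_mul_right h1 (by positivity)) (not_le.2 hm2)
end

section
/- If E ⊆ [0,1) is a Borel set with Hausdorff dimension 1, then there exists e ∈ [0,1] such that the set E + eE = {a + e·b : a, b ∈ E} (sum taken in ℝ) has positive Lebesgue measure. -/
open MeasureTheory


namespace Frost
open Set Filter Topology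
open scoped ENNReal NNReal

/-- index of the dyadic interval of level `n` containing `x` -/
noncomputable def ix (n : ℕ) (x : ℝ) : ℤ := ⌊(2:ℝ)^n * x⌋

lemma ix_anc {k n : ℕ} (h : k ≤ n) (x : ℝ) : ix k x = ix n x / 2^(n-k) := by
  unfold ix
  have := Int.floor_div_natCast ((2:ℝ)^n * x) (2^(n-k))
  push_cast at this
  rw [← this]
  congr 1
  rw [eq_div_iff (by positivity)]
  have : (2:ℝ)^n = 2^k * 2^(n-k) := by rw [← pow_add]; congr 1; omega
  rw [this]; ring

lemma measurable_ix (n : ℕ) : Measurable (ix n) := by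
  unfold ix
  exact Int.measurable_floor.comp (measurable_const.mul measurable_id)

/-- gauge -/
noncomputable def w (d : ℕ × ℤ) : ℝ≥0∞ := ENNReal.ofReal ((2/3:ℝ)^d.1)

noncomputable def cost (S : Set (ℕ × ℤ)) : ℝ≥0∞ := ∑' d, S.indicator w d

def cov (S : Set (ℕ × ℤ)) : Set ℝ := {x | ∃ n, (n, ix n x) ∈ S}

noncomputable def h (A : Set ℝ) : ℝ≥0∞ := ⨅ (S : Set (ℕ × ℤ)) (_ : A ⊆ cov S), cost S

lemma h_le {A : Set ℝ} {S : Set (ℕ × ℤ)} (hS : A ⊆ cov S) : h A ≤ cost S :=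
  iInf₂_le S hS

lemma h_mono {A B : Set ℝ} (hAB : A ⊆ B) : h A ≤ h B :=
  le_iInf₂ fun _ hS => h_le (hAB.trans hS)

lemma cost_mono {S T : Set (ℕ × ℤ)} (hST : S ⊆ T) : cost S ≤ cost T :=
  ENNReal.tsum_le_tsum fun d => indicator_le_indicator_of_subset hST (fun _ => zero_le) d

lemma cost_union (S T : Set (ℕ × ℤ)) : cost (S ∪ T) ≤ cost S + cost T := by
  classical
  unfold cost
  rw [← ENNReal.tsum_add]
  refine ENNReal.tsum_le_tsum fun d => ?_
  by_cases h1 : d ∈ S <;> by_cases h2 : d ∈ T <;> simp [indicator, h1, h2]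

lemma exists_cov {A : Set ℝ} {c : ℝ≥0∞} (hc : h A < c) : ∃ S, A ⊆ cov S ∧ cost S < c := by
  unfold h at hc
  simp only [iInf_lt_iff] at hc
  obtain ⟨S, h1, h2⟩ := hc
  exact ⟨S, h1, h2⟩

lemma cov_union (S T : Set (ℕ × ℤ)) : cov (S ∪ T) = cov S ∪ cov T := by
  ext x; simp [cov, exists_or]

lemma h_union (A B : Set ℝ) : h (A ∪ B) ≤ h A + h B := by
  refine ENNReal.le_of_forall_pos_le_add fun ε hε hfin => ?_
  have hA : h A ≠ ∞ := fun hh => by simp [hh] at hfin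
  have hB : h B ≠ ∞ := fun hh => by simp [hh] at hfin
  have he : (0:ℝ≥0∞) < ε / 2 := by
    simpa using hε.ne'
  obtain ⟨S, hS, hS'⟩ := exists_cov (ENNReal.lt_add_right hA he.ne')
  obtain ⟨T, hT, hT'⟩ := exists_cov (ENNReal.lt_add_right hB he.ne')
  calc h (A ∪ B) ≤ cost (S ∪ T) := h_le (by rw [cov_union]; exact union_subset_union hS hT)
    _ ≤ cost S + cost T := cost_union _ _
    _ ≤ (h A + ε/2) + (h B + ε/2) := add_le_add hS'.le hT'.le
    _ = h A + h B + (ε/2 + ε/2) := by ring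
    _ = _ := by rw [ENNReal.add_halves]

lemma h_empty : h ∅ = 0 := by
  have : h ∅ ≤ cost ∅ := h_le (empty_subset _)
  simpa [cost] using this

lemma cost_singleton (d : ℕ × ℤ) : cost {d} = w d := by
  unfold cost
  rw [tsum_eq_single d]
  · simp
  · intro b hb; simp [hb]

lemma h_cell {A : Set ℝ} (n : ℕ) (j : ℤ) (hA : ∀ x ∈ A, ix n x = j) : h A ≤ w (n, j) := by
  rw [← cost_singleton]
  exact h_le fun x hx => ⟨n, by simp [hA x hx]⟩

/-- maximal elements -/
def Mx (S : Set (ℕ × ℤ)) : Set (ℕ × ℤ) :=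
  {d | d ∈ S ∧ ∀ k < d.1, (k, d.2 / 2^(d.1-k)) ∉ S}

lemma cov_Mx (S : Set (ℕ × ℤ)) : cov (Mx S) = cov S := by
  classical
  ext x
  constructor
  · rintro ⟨n, hn⟩; exact ⟨n, hn.1⟩
  · intro hx
    have hx' : ∃ n, (n, ix n x) ∈ S := hx
    refine ⟨Nat.find hx', Nat.find_spec hx', fun k hk => ?_⟩
    simp only at hk ⊢
    rw [← ix_anc hk.le]
    exact Nat.find_min hx' hk

lemma ssa (U S : Set (ℕ × ℤ)) :
    cost (Mx (U ∪ S)) + h (cov U ∩ cov S) ≤ cost (Mx U) + cost S := by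
  classical
  set T := Mx U with hT
  set P := Mx (U ∪ S) with hP
  set Q := ((T ∪ S) \ P) ∪ (T ∩ S) with hQ
  have hPT : P ⊆ T ∪ S := by
    rintro d ⟨hd, hd'⟩
    rcases hd with hd | hd
    · exact Or.inl ⟨hd, fun k hk hh => hd' k hk (Or.inl hh)⟩
    · exact Or.inr hd
  have hTU : T ⊆ U := fun d hd => hd.1
  have h1 : cov U ∩ cov S ⊆ cov Q := by
    rw [← cov_Mx U]
    rintro x ⟨⟨n, hn⟩, ⟨m, hm⟩⟩
    rcases lt_trichotomy n m with hnm | hnm | hnm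
    · refine ⟨m, Or.inl ⟨Or.inr hm, fun hh => hh.2 n hnm ?_⟩⟩
      simp only
      rw [← ix_anc hnm.le]
      exact Or.inl (hTU hn)
    · subst hnm
      exact ⟨n, Or.inr ⟨hn, hm⟩⟩
    · refine ⟨n, Or.inl ⟨Or.inl hn, fun hh => hh.2 m hnm ?_⟩⟩
      simp only
      rw [← ix_anc hnm.le]
      exact Or.inr hm
  calc cost P + h (cov U ∩ cov S) ≤ cost P + cost Q := by gcongr; exact h_le h1
    _ ≤ cost T + cost S := by
      unfold cost
      rw [← ENNReal.tsum_add, ← ENNReal.tsum_add]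
      refine ENNReal.tsum_le_tsum fun d => ?_
      by_cases a : d ∈ T <;> by_cases b : d ∈ S <;> by_cases c : d ∈ P
      all_goals first
        | (exfalso; have := hPT c; simp [a, b] at this; done)
        | simp [indicator, hQ, a, b, c]

lemma h_iUnion (A : ℕ → Set ℝ) (hA : Monotone A) (η : ℝ≥0∞) (hη : η < h (⋃ n, A n))
    (hfin : ∀ n, h (A n) ≠ ∞) : ∃ n, η < h (A n) := by
  classical
  by_contra hcon
  push Not at hcon
  obtain ⟨c, hc1, hc2⟩ := exists_between hη
  have hε : c - η ≠ 0 := (tsub_pos_of_lt hc1).ne'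
  obtain ⟨ε, hε0, hεs⟩ := ENNReal.exists_pos_sum_of_countable' hε ℕ
  choose S hS hSc using fun n => exists_cov (ENNReal.lt_add_right (hfin n) (hε0 n).ne')
  let U : ℕ → Set (ℕ × ℤ) := fun n => ⋃ i ≤ n, S i
  have hU : ∀ n, U (n+1) = U n ∪ S (n+1) := by
    intro n
    ext d
    simp only [U, mem_iUnion, mem_union]
    constructor
    · rintro ⟨i, hi, hd⟩
      rcases Nat.le_succ_iff.1 hi with h | h
      · exact Or.inl ⟨i, h, hd⟩
      · exact Or.inr (by subst h; exact hd)
    · rintro (⟨i, hi, hd⟩ | hd)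
      · exact ⟨i, by omega, hd⟩
      · exact ⟨n+1, le_rfl, hd⟩
  have hSU : ∀ i n, i ≤ n → S i ⊆ U n := fun i n hin d hd => mem_iUnion₂.2 ⟨i, hin, hd⟩
  have covm : ∀ {S T : Set (ℕ × ℤ)}, S ⊆ T → cov S ⊆ cov T := 
    fun hST x ⟨n, hn⟩ => ⟨n, hST hn⟩
  have key : ∀ n, cost (Mx (U n)) ≤ h (A n) + ∑ i ∈ Finset.range (n+1), ε i := by
    intro n
    induction n with
    | zero =>
      have : U 0 = S 0 := by ext d; simp [U]
      rw [this]
      refine (cost_mono (fun d hd => hd.1)).trans ?_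
      simpa using (hSc 0).le
    | succ n ih =>
      have h1 := ssa (U n) (S (n+1))
      rw [← hU] at h1
      have h2 : h (A n) ≤ h (cov (U n) ∩ cov (S (n+1))) := h_mono (subset_inter
        ((hS n).trans (covm (hSU n n le_rfl))) ((hA (Nat.le_succ n)).trans (hS (n+1))))
      have h3 : cost (Mx (U (n+1))) + h (A n) ≤
          (h (A (n+1)) + ∑ i ∈ Finset.range (n+1+1), ε i) + h (A n) := by
        calc _ ≤ cost (Mx (U (n+1))) + h (cov (U n) ∩ cov (S (n+1))) := by gcongr
          _ ≤ cost (Mx (U n)) + cost (S (n+1)) := h1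
          _ ≤ (h (A n) + ∑ i ∈ Finset.range (n+1), ε i) + (h (A (n+1)) + ε (n+1)) :=
            add_le_add ih (hSc _).le
          _ = _ := by rw [Finset.sum_range_succ _ (n+1)]; ring
      exact (ENNReal.add_le_add_iff_right (hfin n)).1 h3
  have key2 : ∀ n, cost (Mx (U n)) ≤ c := by
    intro n
    refine (key n).trans ?_
    calc _ ≤ η + (c - η) := add_le_add (hcon n) ((ENNReal.sum_le_tsum _).trans hεs.le)
      _ = c := add_tsub_cancel_of_le hc1.le
  have key3 : cost (Mx (⋃ n, U n)) ≤ c := by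
    unfold cost
    rw [ENNReal.tsum_eq_iSup_sum]
    refine iSup_le fun F => ?_
    have : ∀ d ∈ Mx (⋃ n, U n), ∃ n, ∀ m ≥ n, d ∈ Mx (U m) := by
      rintro d ⟨hd, hd'⟩
      obtain ⟨n, hn⟩ := mem_iUnion.1 hd
      obtain ⟨i, hi, hdi⟩ := mem_iUnion₂.1 hn
      exact ⟨n, fun m hm => ⟨mem_iUnion₂.2 ⟨i, hi.trans hm, hdi⟩,
        fun k hk hh => hd' k hk (mem_iUnion.2 ⟨m, hh⟩)⟩⟩
    choose! N hN using this
    refine le_trans ?_ (key2 (F.sup N))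
    refine le_trans ?_ (ENNReal.sum_le_tsum F)
    refine Finset.sum_le_sum fun d hd => ?_
    by_cases hdm : d ∈ Mx (⋃ n, U n)
    · have := hN d hdm (F.sup N) (Finset.le_sup hd)
      simp [hdm, this]
    · simp [hdm]
  have : h (⋃ n, A n) ≤ c := by
    refine (h_le ?_).trans key3
    rw [cov_Mx]
    refine iUnion_subset fun n => (hS n).trans (covm ?_)
    exact (hSU n n le_rfl).trans (subset_iUnion U n)
  exact absurd hc2 (not_lt.2 this)

end Frost

namespace Frost
open Set Filter Topology
open scoped ENNReal NNReal

lemma ix_iff (n : ℕ) (x : ℝ) (j : ℤ) :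
    ix n x = j ↔ (j:ℝ) / 2^n ≤ x ∧ x < (j+1) / 2^n := by
  unfold ix
  rw [Int.floor_eq_iff, div_le_iff₀ (by positivity), lt_div_iff₀ (by positivity), mul_comm x]

lemma ediam_cell (n : ℕ) (j : ℤ) : Metric.ediam {x | ix n x = j} ≤ ENNReal.ofReal ((1/2)^n) := by
  refine Metric.ediam_le fun x hx y hy => ?_
  simp only [mem_ofPred_eq, ix_iff] at hx hy
  rw [edist_dist]
  apply ENNReal.ofReal_le_ofReal
  rw [Real.dist_eq, abs_le]
  have : ((j:ℝ)+1)/2^n = j / 2^n + (1/2)^n := by rw [add_div]; simp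
  constructor <;> linarith

lemma gauge_le (n : ℕ) : ENNReal.ofReal ((1/2)^n) ^ (3/4:ℝ) ≤ ENNReal.ofReal ((2/3)^n) := by
  rw [ENNReal.ofReal_rpow_of_nonneg (by positivity) (by norm_num)]
  apply ENNReal.ofReal_le_ofReal
  rw [← Real.rpow_natCast, ← Real.rpow_mul (by norm_num), mul_comm, Real.rpow_mul (by norm_num),
    Real.rpow_natCast]
  apply pow_le_pow_left₀ (by positivity)
  have : ((1/2:ℝ)^(3/4:ℝ))^4 ≤ (2/3)^4 := by
    rw [← Real.rpow_natCast, ← Real.rpow_mul (by norm_num)]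
    norm_num
  exact (pow_le_pow_iff_left₀ (by positivity) (by norm_num) (by norm_num)).1 this

lemma h_pos {E : Set ℝ} (hdim : dimH E = 1) : 0 < h E := by
  classical
  by_contra hcon
  have h0 : h E = 0 := by simpa using hcon
  have hex : ∀ N : ℕ, ∃ S, E ⊆ cov S ∧ cost S < ENNReal.ofReal ((2/3)^N) := fun N =>
    exists_cov (by rw [h0]; simp only [ENNReal.ofReal_pos]; positivity)
  choose S hS hSc using hex
  have hlt : ∀ N d, d ∈ S N → N < d.1 := by
    intro N d hd
    have h1 : w d ≤ cost (S N) := by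
      rw [← cost_singleton]; exact cost_mono (by simpa using hd)
    have h2 := h1.trans_lt (hSc N)
    unfold w at h2
    rw [ENNReal.ofReal_lt_ofReal_iff (by positivity)] at h2
    exact (pow_lt_pow_iff_right_of_lt_one₀ (by norm_num) (by norm_num)).1 h2
  have hle := Measure.hausdorffMeasure_le_liminf_tsum (X := ℝ) (ι := fun _ : ℕ => ℕ × ℤ) (3/4:ℝ) E
    (l := atTop) (fun N : ℕ => ENNReal.ofReal ((1/2)^N)) (by
      rw [← ENNReal.ofReal_zero]
      exact ENNReal.tendsto_ofReal (tendsto_pow_atTop_nhds_zero_of_lt_one (by norm_num) (by norm_num)))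
    (fun N d => if d ∈ S N then {x | ix d.1 x = d.2} else ∅)
    (Eventually.of_forall fun N d => by
      split_ifs with hd
      · refine (ediam_cell _ _).trans (ENNReal.ofReal_le_ofReal ?_)
        exact pow_le_pow_of_le_one (by norm_num) (by norm_num) (hlt N d hd).le
      · simp)
    (Eventually.of_forall fun N x hx => by
      obtain ⟨n, hn⟩ := hS N hx
      exact mem_iUnion.2 ⟨(n, ix n x), by simp [hn]⟩)
  have hle2 : liminf (fun N => ∑' d : ℕ × ℤ,
      Metric.ediam (if d ∈ S N then {x | ix d.1 x = d.2} else ∅) ^ (3/4:ℝ)) atTop ≤ 0 := by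
    have ht : Tendsto (fun N : ℕ => ENNReal.ofReal ((2/3)^N)) atTop (𝓝 0) := by
      rw [← ENNReal.ofReal_zero]
      exact ENNReal.tendsto_ofReal (tendsto_pow_atTop_nhds_zero_of_lt_one (by norm_num) (by norm_num))
    rw [← ht.liminf_eq]
    refine liminf_le_liminf (Eventually.of_forall fun N => ?_)
    refine le_trans ?_ (hSc N).le
    unfold cost
    refine ENNReal.tsum_le_tsum fun d => ?_
    by_cases hd : d ∈ S N
    · simp only [hd, if_true, indicator_of_mem]
      exact (ENNReal.rpow_le_rpow (ediam_cell _ _) (by norm_num)).trans (gauge_le _)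
    · simp [hd]
  have hz := hle.trans hle2
  have htop : μH[((3/4:ℝ≥0):ℝ)] E = ∞ := hausdorffMeasure_of_lt_dimH (by
    rw [hdim]
    norm_cast
    rw [div_lt_one (by norm_num)]; norm_num)
  push_cast at htop
  rw [htop] at hz
  simp at hz

lemma h_le_one {A : Set ℝ} (hA : A ⊆ Ico 0 1) : h A ≤ 1 := by
  have := h_cell (A := A) 0 0 (fun x hx => by
    rw [ix_iff]; simpa using hA hx)
  simpa [w] using this

lemma box_sub (k : ℕ → ℕ) (V : Set (ℕ → ℕ)) (hV : IsOpen V) (hk : {x | ∀ i, x i ≤ k i} ⊆ V) :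
    ∃ n, {x : ℕ → ℕ | ∀ i < n, x i ≤ k i} ⊆ V := by
  by_contra hcon
  push Not at hcon
  have : ∀ n, ∃ x : ℕ → ℕ, (∀ i < n, x i ≤ k i) ∧ x ∉ V := fun n => by
    obtain ⟨x, hx, hx'⟩ := not_subset.1 (hcon n); exact ⟨x, hx, hx'⟩
  choose x hx hxV using this
  have hc : IsCompact {x : ℕ → ℕ | ∀ i, x i ≤ k i} := by
    have := isCompact_univ_pi (fun i => (finite_Iic (k i)).isCompact)
    convert this using 1
    ext x; simp [Pi.le_def]
  obtain ⟨y, hy, φ, hφ, ht⟩ := hc.tendsto_subseq (x := fun n i => min (x n i) (k i))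
    (fun n i => min_le_right _ _)
  have ht' : Tendsto (fun n => x (φ n)) atTop (𝓝 y) := by
    rw [tendsto_pi_nhds] at ht ⊢
    intro i
    refine (ht i).congr' ?_
    filter_upwards [eventually_gt_atTop i] with n hn
    exact min_eq_left (hx _ i (hn.trans_le (hφ.id_le n)))
  obtain ⟨n, hn⟩ := (ht'.eventually (hV.mem_nhds (hk hy))).exists
  exact hxV _ hn

lemma exists_box (f : (ℕ → ℕ) → ℝ) (hf : range f ⊆ Ico 0 1) (η : ℝ≥0∞) (hη : η < h (range f)) :
    ∃ k : ℕ → ℕ, ∀ n, η < h (f '' {x | ∀ i < n, x i ≤ k i}) := by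
  have step : ∀ (B : {B : Set (ℕ → ℕ) // η < h (f '' B)}) (n : ℕ),
      ∃ j, η < h (f '' (B.1 ∩ {x | x n ≤ j})) := by
    rintro ⟨B, hB⟩ n
    refine h_iUnion (fun j => f '' (B ∩ {x | x n ≤ j})) ?_ η ?_ ?_
    · intro i j hij
      exact image_mono (inter_subset_inter_right _ fun x (hx : x n ≤ i) => le_trans hx hij)
    · refine hB.trans_le (h_mono ?_)
      rintro _ ⟨x, hx, rfl⟩
      exact mem_iUnion.2 ⟨x n, x, ⟨hx, le_refl (x n)⟩, rfl⟩
    · intro j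
      exact ((h_le_one ((image_subset_range _ _).trans hf)).trans_lt ENNReal.one_lt_top).ne
  choose J hJ using step
  let B : ℕ → {B : Set (ℕ → ℕ) // η < h (f '' B)} := fun n =>
    Nat.rec ⟨univ, by rwa [image_univ]⟩ (fun n B => ⟨B.1 ∩ {x | x n ≤ J B n}, hJ B n⟩) n
  refine ⟨fun n => J (B n) n, fun n => ?_⟩
  have : {x : ℕ → ℕ | ∀ i < n, x i ≤ J (B i) i} = (B n).1 := by
    induction n with
    | zero => ext x; simp [B]
    | succ n ih =>
      have : (B (n+1)).1 = (B n).1 ∩ {x | x n ≤ J (B n) n} := rfl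
      rw [this, ← ih]
      ext x
      simp only [mem_ofPred_eq, mem_inter_iff]
      constructor
      · intro hx
        exact ⟨fun i hi => hx i (by omega), hx n (by omega)⟩
      · rintro ⟨h1, h2⟩ i hi
        rcases Nat.lt_succ_iff_lt_or_eq.1 hi with h | h
        · exact h1 i h
        · subst h; exact h2
  rw [this]
  exact (B n).2

lemma cost_shift (S : Set (ℕ × ℤ)) : cost {d | (d.1, d.2 + 1) ∈ S} = cost S := by
  unfold cost
  let e : ℕ × ℤ ≃ ℕ × ℤ := Equiv.prodCongr (Equiv.refl ℕ) (Equiv.addRight 1)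
  rw [← e.tsum_eq (S.indicator w)]
  rfl

lemma exists_compact {E : Set ℝ} (hE : MeasurableSet E) (hsub : E ⊆ Ico (0 : ℝ) 1)
    (hdim : dimH E = 1) : ∃ K ⊆ E, IsCompact K ∧ 0 < h K := by
  have hpos := h_pos hdim
  have han := hE.analyticSet
  rw [AnalyticSet] at han
  rcases han with h0 | ⟨f, hfc, hfr⟩
  · rw [h0, h_empty] at hpos; simp at hpos
  subst hfr
  obtain ⟨η, hη0, hη⟩ := exists_between hpos
  obtain ⟨k, hk⟩ := exists_box f hsub η hη
  have hc : IsCompact {x : ℕ → ℕ | ∀ i, x i ≤ k i} := by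
    have := isCompact_univ_pi (fun i => (finite_Iic (k i)).isCompact)
    convert this using 1
    ext x; simp [Pi.le_def]
  refine ⟨f '' {x | ∀ i, x i ≤ k i}, image_subset_range _ _, hc.image hfc, ?_⟩
  have : η / 2 ≤ h (f '' {x | ∀ i, x i ≤ k i}) := by
    refine le_iInf₂ fun S hS => ?_
    let U : Set ℝ := ⋃ d ∈ S, Ioo (((d.2:ℝ) - 1) / 2^d.1) ((d.2+1)/2^d.1)
    have hU : IsOpen U := isOpen_biUnion fun d _ => isOpen_Ioo
    have hcovU : cov S ⊆ U := by
      rintro x ⟨n, hn⟩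
      refine mem_iUnion₂.2 ⟨_, hn, ?_⟩
      have := (ix_iff n x _).1 rfl
      refine ⟨lt_of_lt_of_le ?_ this.1, this.2⟩
      simp only
      gcongr
      linarith
    have hU2 : U ⊆ cov (S ∪ {d | (d.1, d.2 + 1) ∈ S}) := by
      intro x hx
      obtain ⟨⟨n, j⟩, hd, h1, h2⟩ := mem_iUnion₂.1 hx
      simp only at h1 h2
      rcases le_or_gt ((j:ℝ)/2^n) x with hjx | hjx
      · refine ⟨n, Or.inl ?_⟩
        rw [(ix_iff n x j).2 ⟨hjx, h2⟩]; exact hd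
      · refine ⟨n, Or.inr ?_⟩
        rw [(ix_iff n x (j-1)).2 ⟨by push_cast; exact h1.le, by push_cast; simpa using hjx⟩]
        simpa using hd
    obtain ⟨n, hn⟩ := box_sub k (f ⁻¹' U) (hU.preimage hfc)
      (image_subset_iff.1 (hS.trans hcovU))
    have h1 : η ≤ cost S + cost S := by
      calc η ≤ h (f '' {x | ∀ i < n, x i ≤ k i}) := (hk n).le
        _ ≤ cost (S ∪ {d | (d.1, d.2 + 1) ∈ S}) := h_le ((image_subset_iff.2 hn).trans hU2)
        _ ≤ cost S + cost {d | (d.1, d.2 + 1) ∈ S} := cost_union _ _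
        _ = _ := by rw [cost_shift]
    rw [← two_mul] at h1
    exact ENNReal.div_le_of_le_mul' h1
  exact lt_of_lt_of_le (ENNReal.half_pos hη0.ne') this

end Frost

namespace Frost
open Set Filter Topology
open scoped ENNReal NNReal

noncomputable def cell (n : ℕ) (j : ℤ) : Set ℝ := {x | ix n x = j}

lemma measurableSet_cell (n : ℕ) (j : ℤ) : MeasurableSet (cell n j) :=
  measurable_ix n (measurableSet_singleton j)

lemma cell_split (n : ℕ) (j : ℤ) : cell n j = cell (n+1) (2*j) ∪ cell (n+1) (2*j+1) := by
  ext x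
  have := ix_anc (Nat.le_succ n) x
  simp only [cell, mem_ofPred_eq, mem_union]
  rw [this]
  simp only [Nat.succ_eq_add_one, Nat.add_sub_cancel_left, pow_one]
  omega

lemma cell_disj (n : ℕ) {i j : ℤ} (hij : i ≠ j) : Disjoint (cell n i) (cell n j) := by
  rw [Set.disjoint_left]
  intro x hx hy
  exact hij ((hx : ix n x = i).symm.trans hy)

/-- greedy mass distribution -/
noncomputable def m (K : Set ℝ) : ℕ → ℤ → ℝ≥0∞
  | 0, j => if j = 0 then h K else 0
  | n+1, j => if j % 2 = 0 then min (m K n (j/2)) (h (K ∩ cell (n+1) j))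
      else m K n (j/2) - min (m K n (j/2)) (h (K ∩ cell (n+1) (j-1)))

lemma m_add (K : Set ℝ) (n : ℕ) (j : ℤ) :
    m K (n+1) (2*j) + m K (n+1) (2*j+1) = m K n j := by
  have h1 : (2*j) % 2 = 0 := by omega
  have h2 : (2*j+1) % 2 ≠ 0 := by omega
  have h3 : (2*j+1) / 2 = j := by omega
  have h4 : (2*j) / 2 = j := by omega
  simp only [m, h1, h2, h3, h4, if_true, if_false, add_sub_cancel_right]
  exact add_tsub_cancel_of_le (min_le_left _ _)

lemma m_le {K : Set ℝ} (hK : K ⊆ Ico 0 1) (n : ℕ) (j : ℤ) : m K n j ≤ h (K ∩ cell n j) := by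
  induction n generalizing j with
  | zero =>
    simp only [m]
    split_ifs with hj
    · subst hj
      refine h_mono fun x hx => ⟨hx, ?_⟩
      have := hK hx
      simp only [cell, mem_ofPred_eq, ix_iff]
      simpa using this
    · simp
  | succ n ih =>
    simp only [m]
    split_ifs with hj
    · exact min_le_right _ _
    · have hj2 : j = 2 * (j/2) + 1 := by omega
      have h1 := ih (j/2)
      rw [cell_split, inter_union_distrib_left, ← hj2,
        show 2 * (j/2) = j - 1 by omega] at h1
      rw [tsub_le_iff_left]
      rcases le_total (m K n (j/2)) (h (K ∩ cell (n+1) (j-1))) with hh | hh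
      · rw [min_eq_left hh]; exact le_self_add
      · rw [min_eq_right hh]; exact h1.trans (h_union _ _)

noncomputable def nu (K : Set ℝ) (n : ℕ) : Measure ℝ :=
  Measure.sum fun j : ℤ => m K n j • Measure.dirac ((j:ℝ)/2^n)

lemma ix_pt (n : ℕ) (j : ℤ) : ix n ((j:ℝ)/2^n) = j := by
  rw [ix_iff]
  exact ⟨le_rfl, by gcongr; linarith⟩

lemma nu_cell (K : Set ℝ) {k n : ℕ} (hk : k ≤ n) (i : ℤ) : nu K n (cell k i) = m K k i := by
  induction hk using Nat.decreasingInduction generalizing i with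
  | self =>
    rw [nu, Measure.sum_apply _ (measurableSet_cell _ _), tsum_eq_single i]
    · have : (i:ℝ)/2^n ∈ cell n i := ix_pt n i
      simp [measurableSet_cell, this]
    · intro j hj
      have : (j:ℝ)/2^n ∉ cell n i := fun hh => hj ((ix_pt n j).symm.trans hh)
      simp [measurableSet_cell, this]
  | of_succ k hk ih =>
    rw [cell_split, measure_union (cell_disj _ (by omega)) (measurableSet_cell _ _), ih, ih, m_add]

lemma nu_univ (K : Set ℝ) (n : ℕ) : nu K n univ = h K := by
  have : (univ : Set ℝ) = ⋃ j : ℤ, cell 0 j := by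
    ext x; simp [cell]
  rw [this, measure_iUnion (fun i j hij => cell_disj 0 hij) (fun j => measurableSet_cell _ _)]
  simp only [nu_cell K (Nat.zero_le n), m]
  simp

lemma nu_ball {K : Set ℝ} (hK : K ⊆ Ico 0 1) {k n : ℕ} (hk : k ≤ n) (x : ℝ) :
    nu K n (Metric.closedBall x (8 / 2^k)) ≤ 19 * ENNReal.ofReal ((2/3)^k) := by
  have hsub : Metric.closedBall x (8 / 2^k) ⊆
      ⋃ i ∈ Finset.Icc (ix k x - 9) (ix k x + 9), cell k i := by
    intro y hy
    rw [Metric.mem_closedBall, Real.dist_eq, abs_le] at hy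
    refine mem_iUnion₂.2 ⟨ix k y, ?_, rfl⟩
    have hp : (0:ℝ) < 2^k := by positivity
    have h8 : (8:ℝ)/2^k * 2^k = 8 := by field_simp
    have e1 : 2^k * y - 2^k * x ≤ 8 := by nlinarith
    have e2 : -8 ≤ 2^k * y - 2^k * x := by nlinarith
    unfold ix
    have a1 := Int.floor_le ((2:ℝ)^k * x)
    have a2 := Int.lt_floor_add_one ((2:ℝ)^k * x)
    have b1 := Int.floor_le ((2:ℝ)^k * y)
    have b2 := Int.lt_floor_add_one ((2:ℝ)^k * y)
    rw [Finset.mem_Icc]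
    constructor
    · have : ((⌊(2:ℝ)^k * x⌋ : ℤ) : ℝ) < ((⌊(2:ℝ)^k * y⌋ + 9 : ℤ) : ℝ) := by
        push_cast; linarith
      have := Int.cast_lt.1 this
      omega
    · have : ((⌊(2:ℝ)^k * y⌋ : ℤ) : ℝ) < ((⌊(2:ℝ)^k * x⌋ + 9 : ℤ) : ℝ) := by
        push_cast; linarith
      have := Int.cast_lt.1 this
      omega
  calc _ ≤ nu K n (⋃ i ∈ Finset.Icc (ix k x - 9) (ix k x + 9), cell k i) := measure_mono hsub
    _ ≤ ∑ i ∈ Finset.Icc (ix k x - 9) (ix k x + 9), nu K n (cell k i) :=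
      measure_biUnion_finset_le _ _
    _ ≤ ∑ i ∈ Finset.Icc (ix k x - 9) (ix k x + 9), ENNReal.ofReal ((2/3)^k) := by
      refine Finset.sum_le_sum fun i _ => ?_
      rw [nu_cell K hk]
      exact (m_le hK k i).trans (h_cell k i fun x hx => hx.2)
    _ = _ := by
      rw [Finset.sum_const, Int.card_Icc, show (ix k x + 9 + 1 - (ix k x - 9)).toNat = 19 by omega]
      simp

lemma nu_supp {K : Set ℝ} (hK : K ⊆ Ico 0 1) (n : ℕ) :
    nu K n (Metric.cthickening (1/2^n) K)ᶜ = 0 := by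
  have hm : MeasurableSet (Metric.cthickening (1/2^n) K)ᶜ := 
    Metric.isClosed_cthickening.measurableSet.compl
  rw [nu, Measure.sum_apply _ hm, ENNReal.tsum_eq_zero]
  intro j
  by_cases h0 : m K n j = 0
  · simp [h0]
  have : (j:ℝ)/2^n ∈ Metric.cthickening (1/2^n) K := by
    have h1 : h (K ∩ cell n j) ≠ 0 := fun hh => h0 (le_antisymm (hh ▸ m_le hK n j) zero_le)
    have h2 : (K ∩ cell n j).Nonempty := by
      by_contra hne
      rw [not_nonempty_iff_eq_empty] at hne
      exact h1 (by rw [hne, h_empty])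
    obtain ⟨y, hyK, hy⟩ := h2
    have hy' := (ix_iff n y j).1 hy
    refine Metric.mem_cthickening_of_dist_le _ y _ _ hyK ?_
    rw [Real.dist_eq, abs_le]
    rw [add_div] at hy'
    have : (0:ℝ) < 1/2^n := by positivity
    constructor <;> linarith
  rw [Measure.smul_apply, Measure.dirac_apply' _ hm, indicator_of_notMem (Set.notMem_compl_iff.2 this), smul_zero]

end Frost

namespace Frost
open Set Filter Topology
open scoped ENNReal NNReal

lemma cs {α : Type*} [MeasurableSpace α] (μ : Measure α) (g : α → ℝ≥0∞) (hg : AEMeasurable g μ) :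
    (∫⁻ x, g x ∂μ)^2 ≤ (∫⁻ x, g x ^ 2 ∂μ) * μ univ := by
  have h2 : (2:ℝ).HolderConjugate 2 := by
    rw [Real.holderConjugate_iff]; norm_num
  have := ENNReal.lintegral_mul_le_Lp_mul_Lq μ h2 hg (g := fun _ => 1) aemeasurable_const
  simp only [Pi.mul_apply, mul_one, ENNReal.one_rpow, lintegral_const, one_mul] at this
  calc (∫⁻ x, g x ∂μ)^2 ≤ _ := pow_le_pow_left₀ zero_le this 2
    _ = _ := by
      rw [mul_pow, ← ENNReal.rpow_natCast, ← ENNReal.rpow_natCast, ← ENNReal.rpow_mul,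
        ← ENNReal.rpow_mul]
      norm_num

lemma fub {α β : Type*} [MeasurableSpace α] [MeasurableSpace β] (μ : Measure α) (ν : Measure β)
    [SFinite μ] [SFinite ν] (W : Set (α × β)) (hW : MeasurableSet W) :
    ∫⁻ x, ν {y | (x, y) ∈ W} ∂μ = ∫⁻ y, μ {x | (x, y) ∈ W} ∂ν :=
  (Measure.prod_apply hW).symm.trans (Measure.prod_apply_symm hW)

lemma l2_lower (ρ : Measure ℝ) [IsFiniteMeasure ρ] (r : ℝ) (A : Set ℝ)
    (hA : ρ Aᶜ = 0) :
    (ENNReal.ofReal (2*r) * ρ univ)^2 ≤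
      (ENNReal.ofReal (2*r) * (ρ.prod ρ) {p | |p.1 - p.2| ≤ 2*r}) *
        volume (Metric.cthickening r A) := by
  have hW : IsClosed {p : ℝ × ℝ | |p.2 - p.1| ≤ r} :=
    isClosed_le (by fun_prop) (by fun_prop)
  have hf : ∫⁻ x, ρ {y | |y - x| ≤ r} = ENNReal.ofReal (2*r) * ρ univ := by
    have := fub volume ρ _ hW.measurableSet
    simp only [mem_ofPred_eq] at this
    rw [this, ← lintegral_const]
    refine lintegral_congr fun y => ?_
    rw [← Real.volume_closedBall y r]
    congr 1
    ext x; simp [Real.dist_eq, abs_sub_comm]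
  have hgm : Measurable fun x => ρ {y | |y - x| ≤ r} :=
    measurable_measure_prodMk_left hW.measurableSet
  have hN : MeasurableSet (Metric.cthickening r A) := Metric.isClosed_cthickening.measurableSet
  have hres : ∫⁻ x, ρ {y | |y - x| ≤ r} = ∫⁻ x in Metric.cthickening r A, ρ {y | |y - x| ≤ r} := by
    rw [← lintegral_indicator hN]
    refine lintegral_congr fun x => ?_
    by_cases hx : x ∈ Metric.cthickening r A
    · simp [hx]
    · rw [indicator_of_notMem hx]
      refine measure_mono_null (show {y | |y - x| ≤ r} ⊆ Aᶜ from fun y hy => ?_) hA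
      rw [mem_compl_iff]
      refine fun hyA => hx ?_
      have hy : |y - x| ≤ r := hy
      refine Metric.mem_cthickening_of_dist_le x y _ _ hyA ?_
      rwa [Real.dist_eq, abs_sub_comm]
  have hW2 : IsClosed {p : ℝ × (ℝ × ℝ) | |p.2.1 - p.1| ≤ r ∧ |p.2.2 - p.1| ≤ r} :=
    IsClosed.and (isClosed_le (by fun_prop) (by fun_prop)) (isClosed_le (by fun_prop) (by fun_prop))
  have hsq : ∫⁻ x, (ρ {y | |y - x| ≤ r})^2 ≤
      ENNReal.ofReal (2*r) * (ρ.prod ρ) {p | |p.1 - p.2| ≤ 2*r} := by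
    have h1 : ∀ x, (ρ {y | |y - x| ≤ r})^2 =
        (ρ.prod ρ) {q | (x, q) ∈ {p : ℝ × (ℝ × ℝ) | |p.2.1 - p.1| ≤ r ∧ |p.2.2 - p.1| ≤ r}} := by
      intro x
      rw [sq, ← Measure.prod_prod]
      rfl
    simp_rw [h1]
    rw [fub volume (ρ.prod ρ) _ hW2.measurableSet]
    have hD : MeasurableSet {p : ℝ × ℝ | |p.1 - p.2| ≤ 2*r} :=
      (isClosed_le (by fun_prop) (by fun_prop)).measurableSet
    rw [← lintegral_indicator_const hD]
    refine lintegral_mono fun p => ?_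
    by_cases hp : p ∈ {p : ℝ × ℝ | |p.1 - p.2| ≤ 2*r}
    · rw [indicator_of_mem hp, ← Real.volume_closedBall p.1 r]
      refine measure_mono fun x hx => ?_
      have := hx.1
      simpa [Real.dist_eq, abs_sub_comm] using this
    · rw [indicator_of_notMem hp]
      rw [nonpos_iff_eq_zero]
      refine measure_mono_null (fun x hx => hp ?_) (measure_empty (μ := volume))
      have h1 : |p.1 - x| ≤ r := hx.1
      have h2 : |p.2 - x| ≤ r := hx.2
      have h3 := abs_sub_le p.1 x p.2
      rw [abs_sub_comm x] at h3
      show |p.1 - p.2| ≤ 2 * r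
      linarith
  rw [← hf, hres]
  calc _ ≤ _ := cs (volume.restrict (Metric.cthickening r A)) _ hgm.aemeasurable
    _ ≤ _ := by
      rw [Measure.restrict_apply_univ]
      gcongr
      exact (setLIntegral_le_lintegral _ _).trans hsq

lemma slice (u v : ℝ) (n : ℕ) :
    volume.restrict (Icc (0:ℝ) 1) {e | |u + e * v| ≤ 4/2^n} ≤
      ENNReal.ofReal (16/2^n) * (1 + ∑ k ∈ Finset.range (n+1),
        ENNReal.ofReal (2^k) * {p : ℝ × ℝ | |p.1| ≤ 8/2^k ∧ |p.2| ≤ 8/2^k}.indicator 1 (u, v)) := by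
  have hm : MeasurableSet {e : ℝ | |u + e * v| ≤ 4/2^n} :=
    (isClosed_le (by fun_prop) (by fun_prop)).measurableSet
  rw [Measure.restrict_apply hm]
  -- size bound
  have hsize : v ≠ 0 → volume ({e | |u + e * v| ≤ 4/2^n} ∩ Icc (0:ℝ) 1) ≤
      ENNReal.ofReal (8/2^n/|v|) := by
    intro hv
    have hv' : 0 < |v| := abs_pos.2 hv
    have : ENNReal.ofReal (8/2^n/|v|) = volume (Metric.closedBall (-u/v) (4/2^n/|v|)) := by
      rw [Real.volume_closedBall]; congr 1; ring
    rw [this]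
    refine measure_mono fun e he => ?_
    have he1 : |u + e * v| ≤ 4/2^n := he.1
    rw [Metric.mem_closedBall, Real.dist_eq, le_div_iff₀ hv', ← abs_mul]
    rw [show (e - -u/v) * v = u + e * v by rw [sub_mul, div_mul_cancel₀ _ hv]; ring]
    exact he1
  have hterm : ∀ k, k ≤ n → |u| ≤ 8/2^k → |v| ≤ 8/2^k → ENNReal.ofReal (16/2^n*2^k) ≤ 
      ENNReal.ofReal (16/2^n) * (1 + ∑ k ∈ Finset.range (n+1),
        ENNReal.ofReal (2^k) * {p : ℝ × ℝ | |p.1| ≤ 8/2^k ∧ |p.2| ≤ 8/2^k}.indicator 1 (u, v)) := by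
    intro k hk hu hv
    rw [ENNReal.ofReal_mul (by positivity)]
    gcongr
    refine le_trans ?_ le_add_self
    refine le_trans ?_ (Finset.single_le_sum (f := fun k => ENNReal.ofReal (2^k) *
      {p : ℝ × ℝ | |p.1| ≤ 8/2^k ∧ |p.2| ≤ 8/2^k}.indicator 1 (u, v))
      (fun _ _ => zero_le) (Finset.mem_range.2 (Nat.lt_succ_of_le hk)))
    have : (u, v) ∈ {p : ℝ × ℝ | |p.1| ≤ 8/2^k ∧ |p.2| ≤ 8/2^k} := ⟨hu, hv⟩
    simp only [indicator_of_mem this, Pi.one_apply, mul_one, le_refl]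
  by_cases hne : ({e | |u + e * v| ≤ 4/2^n} ∩ Icc (0:ℝ) 1).Nonempty
  swap
  · rw [not_nonempty_iff_eq_empty.1 hne]; simp
  have hu : |u| ≤ 4/2^n + |v| := by
    obtain ⟨e, he, he0, he1⟩ := hne
    have he : |u + e * v| ≤ 4/2^n := he
    have h1 : |e * v| ≤ |v| := by
      rw [abs_mul, abs_of_nonneg he0]
      exact mul_le_of_le_one_left (abs_nonneg _) he1
    have h2 : |u| ≤ |u + e * v| + |e * v| := by
      have := abs_sub (u + e*v) (e*v)
      simpa using this
    linarith
  have hn0 : (0:ℝ) < 1/2^n := by positivity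
  have e4 : (4:ℝ)/2^n = 4*(1/2^n) := by ring
  have e8 : ∀ k : ℕ, (8:ℝ)/2^k = 8*(1/2^k) := by intro k; ring
  rcases le_or_gt |v| (1/2^n) with hv | hv
  · refine le_trans ?_ (hterm n le_rfl (by rw [e8]; linarith) (by rw [e8]; linarith))
    calc _ ≤ volume (Icc (0:ℝ) 1) := measure_mono inter_subset_right
      _ ≤ _ := by
        rw [Real.volume_Icc]; apply ENNReal.ofReal_le_ofReal
        rw [div_mul_cancel₀ _ (by positivity)]; norm_num
  have hv0 : 0 < |v| := hn0.trans hv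
  refine (hsize (abs_pos.1 hv0)).trans ?_
  rcases lt_or_ge 1 |v| with hv1 | hv1
  · calc ENNReal.ofReal (8/2^n/|v|) ≤ ENNReal.ofReal (16/2^n) := by
          apply ENNReal.ofReal_le_ofReal
          rw [div_le_iff₀ hv0, e8, show (16:ℝ)/2^n = 16*(1/2^n) by ring]
          nlinarith
      _ ≤ _ := by
        nth_rw 1 [← mul_one (ENNReal.ofReal (16/2^n))]
        gcongr
        exact le_self_add
  obtain ⟨k, hk1, hk2⟩ := exists_nat_pow_near_of_lt_one hv0 hv1 (by norm_num : (0:ℝ) < 1/2)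
    (by norm_num)
  have hkn : k < n := by
    by_contra hcon
    have : (1/2:ℝ)^k ≤ (1/2)^n := pow_le_pow_of_le_one (by norm_num) (by norm_num) (by omega)
    rw [one_div_pow (2:ℝ) n] at this
    linarith
  have hnk : (1:ℝ)/2^n ≤ 1/2^k := one_div_le_one_div_of_le (by positivity)
    (pow_le_pow_right₀ (by norm_num) hkn.le)
  rw [one_div_pow] at hk1 hk2
  refine le_trans ?_ (hterm k hkn.le (by rw [e8]; linarith) (by rw [e8]; linarith))
  apply ENNReal.ofReal_le_ofReal
  rw [div_le_iff₀ hv0, e8, show (16:ℝ)/2^n = 16*(1/2^n) by ring]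
  have : 1 ≤ 2 * (2^k * |v|) := by
    rw [div_lt_iff₀ (by positivity), pow_succ] at hk1
    linarith
  nlinarith

end Frost

namespace Frost
open Set Filter Topology
open scoped ENNReal NNReal

/-- the quadruple set -/
def Wset (n : ℕ) : Set (ℝ × ((ℝ × ℝ) × (ℝ × ℝ))) :=
  {p | |(p.2.1.1 + p.1 * p.2.1.2) - (p.2.2.1 + p.1 * p.2.2.2)| ≤ 4/2^n}

lemma Wset_meas (n : ℕ) : MeasurableSet (Wset n) :=
  (isClosed_le (by fun_prop) (by fun_prop)).measurableSet

noncomputable def Q (ν : Measure ℝ) (n : ℕ) (e : ℝ) : ℝ≥0∞ :=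
  ((ν.prod ν).prod (ν.prod ν)) {q | (e, q) ∈ Wset n}

lemma pair_bound (ν : Measure ℝ) [IsFiniteMeasure ν] (hν : ν univ ≤ 1) (r : ℝ) (c : ℝ≥0∞)
    (hb : ∀ x, ν (Metric.closedBall x r) ≤ c) :
    ((ν.prod ν).prod (ν.prod ν)) {q | |q.1.1 - q.2.1| ≤ r ∧ |q.1.2 - q.2.2| ≤ r} ≤ c * c := by
  have hm : MeasurableSet {q : (ℝ × ℝ) × (ℝ × ℝ) | |q.1.1 - q.2.1| ≤ r ∧ |q.1.2 - q.2.2| ≤ r} :=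
    (IsClosed.and (isClosed_le (by fun_prop) (by fun_prop))
      (isClosed_le (by fun_prop) (by fun_prop))).measurableSet
  rw [Measure.prod_apply hm]
  have h1 : ∀ p : ℝ × ℝ, (ν.prod ν) (Prod.mk p ⁻¹'
      {q : (ℝ × ℝ) × (ℝ × ℝ) | |q.1.1 - q.2.1| ≤ r ∧ |q.1.2 - q.2.2| ≤ r}) ≤ c * c := by
    intro p
    have : Prod.mk p ⁻¹' {q : (ℝ × ℝ) × (ℝ × ℝ) | |q.1.1 - q.2.1| ≤ r ∧ |q.1.2 - q.2.2| ≤ r}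
        = Metric.closedBall p.1 r ×ˢ Metric.closedBall p.2 r := by
      ext q
      simp [Real.dist_eq, abs_sub_comm]
    rw [this, Measure.prod_prod]
    exact mul_le_mul' (hb _) (hb _)
  calc _ ≤ ∫⁻ p, c * c ∂(ν.prod ν) := lintegral_mono h1
    _ = c * c * (ν univ * ν univ) := by rw [lintegral_const, ← univ_prod_univ, Measure.prod_prod]
    _ ≤ c * c * (1 * 1) := by gcongr
    _ = c * c := by simp

lemma energy (ν : Measure ℝ) [IsFiniteMeasure ν] (hν : ν univ ≤ 1) (n : ℕ)
    (hb : ∀ k ≤ n, ∀ x, ν (Metric.closedBall x (8/2^k)) ≤ 19 * ENNReal.ofReal ((2/3)^k)) :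
    ∫⁻ e in Icc (0:ℝ) 1, Q ν n e ≤ ENNReal.ofReal (16/2^n) * 3250 := by
  set P := (ν.prod ν).prod (ν.prod ν) with hP
  have hR : ∀ k : ℕ, MeasurableSet
      {q : (ℝ × ℝ) × (ℝ × ℝ) | |q.1.1 - q.2.1| ≤ 8/2^k ∧ |q.1.2 - q.2.2| ≤ 8/2^k} := fun k =>
    (IsClosed.and (isClosed_le (by fun_prop) (by fun_prop))
      (isClosed_le (by fun_prop) (by fun_prop))).measurableSet
  unfold Q
  rw [fub (volume.restrict (Icc (0:ℝ) 1)) P _ (Wset_meas n)]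
  have h1 : ∀ q : (ℝ × ℝ) × (ℝ × ℝ), volume.restrict (Icc (0:ℝ) 1) {e | (e, q) ∈ Wset n} ≤
      ENNReal.ofReal (16/2^n) * (1 + ∑ k ∈ Finset.range (n+1), ENNReal.ofReal (2^k) *
        {q : (ℝ × ℝ) × (ℝ × ℝ) | |q.1.1 - q.2.1| ≤ 8/2^k ∧ |q.1.2 - q.2.2| ≤ 8/2^k}.indicator 1 q) := by
    intro q
    have := slice (q.1.1 - q.2.1) (q.1.2 - q.2.2) n
    have e1 : {e | (e, q) ∈ Wset n} =
        {e : ℝ | |q.1.1 - q.2.1 + e * (q.1.2 - q.2.2)| ≤ 4/2^n} := by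
      ext e
      simp only [Wset, mem_ofPred_eq]
      ring_nf
    rw [e1]
    simpa only [indicator, mem_ofPred_eq, Pi.one_apply] using this
  refine (lintegral_mono h1).trans ?_
  rw [lintegral_const_mul' _ _ ENNReal.ofReal_ne_top]
  gcongr
  rw [lintegral_add_left measurable_const, lintegral_finsetSum]
  swap
  · intro k _
    exact (measurable_one.indicator (hR k)).const_mul _
  have hPu : P univ ≤ 1 := by
    rw [hP, ← univ_prod_univ, Measure.prod_prod, ← univ_prod_univ, Measure.prod_prod]
    calc _ ≤ (1 * 1) * (1 * 1 : ℝ≥0∞) := by gcongr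
      _ = 1 := by simp
  have h2 : ∀ k ∈ Finset.range (n+1), ∫⁻ q, ENNReal.ofReal (2^k) *
      {q : (ℝ × ℝ) × (ℝ × ℝ) | |q.1.1 - q.2.1| ≤ 8/2^k ∧ |q.1.2 - q.2.2| ≤ 8/2^k}.indicator 1 q ∂P
      ≤ 361 * ENNReal.ofReal ((8/9)^k) := by
    intro k hk
    rw [lintegral_const_mul' _ _ ENNReal.ofReal_ne_top, lintegral_indicator_one (hR k)]
    refine (mul_le_mul_right (pair_bound ν hν _ _
      (hb k (Nat.lt_succ_iff.1 (Finset.mem_range.1 hk)))) _).trans ?_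
    have : ((8:ℝ)/9)^k = 2^k * ((2/3)^k * (2/3)^k) := by
      rw [← mul_pow, ← mul_pow]; norm_num
    rw [this, ENNReal.ofReal_mul (by positivity), ENNReal.ofReal_mul (by positivity)]
    refine le_of_eq ?_
    ring
  have h3 : ∑ k ∈ Finset.range (n+1), ENNReal.ofReal ((8/9)^k) ≤ 9 := by
    rw [← ENNReal.ofReal_sum_of_nonneg (fun _ _ => by positivity), geom_sum_eq (by norm_num)]
    rw [show (9:ℝ≥0∞) = ENNReal.ofReal 9 by simp]
    apply ENNReal.ofReal_le_ofReal
    have : (0:ℝ) ≤ (8/9)^(n+1) := by positivity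
    rw [show (8/9 - 1 : ℝ) = -(1/9) by norm_num, div_neg, neg_le, le_div_iff₀ (by norm_num)]
    linarith
  calc _ ≤ 1 + ∑ k ∈ Finset.range (n+1), 361 * ENNReal.ofReal ((8/9)^k) := by
        gcongr with k hk
        · rw [lintegral_const, one_mul]; exact hPu
        · exact h2 k hk
    _ = 1 + 361 * ∑ k ∈ Finset.range (n+1), ENNReal.ofReal ((8/9)^k) := by rw [Finset.mul_sum]
    _ ≤ 1 + 361 * 9 := by gcongr
    _ = 3250 := by norm_num

lemma lower (ν : Measure ℝ) [IsFiniteMeasure ν] (n : ℕ) (K : Set ℝ) (hK : IsCompact K)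
    (hs : ν (Metric.cthickening (1/2^n) K)ᶜ = 0) (e : ℝ) (he : e ∈ Icc (0:ℝ) 1) :
    ENNReal.ofReal (4/2^n) * (ν univ)^4 ≤
      Q ν n e * volume (Metric.cthickening (4/2^n) (image2 (fun a b : ℝ => a + e * b) K K)) := by
  set f : ℝ × ℝ → ℝ := fun p => p.1 + e * p.2 with hf
  have hfm : Measurable f := by fun_prop
  set D := image2 (fun a b : ℝ => a + e * b) K K
  set A := Metric.cthickening (2/2^n) D with hA
  have hAm : MeasurableSet A := Metric.isClosed_cthickening.measurableSet
  set ρ := (ν.prod ν).map f with hρ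
  have hρA : ρ Aᶜ = 0 := by
    rw [hρ, Measure.map_apply hfm hAm.compl]
    set T := Metric.cthickening (1/2^n) K with hT
    have hsub : f ⁻¹' Aᶜ ⊆ (Tᶜ ×ˢ univ) ∪ (univ ×ˢ Tᶜ) := by
      intro p hp
      by_contra hcon
      simp only [mem_union, mem_prod, mem_univ, and_true, true_and, not_or, mem_compl_iff,
        not_not] at hcon
      obtain ⟨h1, h2⟩ := hcon
      rw [hT, hK.cthickening_eq_biUnion_closedBall (by positivity)] at h1 h2
      obtain ⟨a, ha, h1⟩ := mem_iUnion₂.1 h1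
      obtain ⟨b, hb, h2⟩ := mem_iUnion₂.1 h2
      apply hp
      refine Metric.mem_cthickening_of_dist_le _ (a + e * b) _ _ ⟨a, ha, b, hb, rfl⟩ ?_
      rw [Metric.mem_closedBall, Real.dist_eq] at h1 h2
      rw [Real.dist_eq]
      have e1 : f p - (a + e * b) = (p.1 - a) + e * (p.2 - b) := by simp only [hf]; ring
      rw [e1]
      refine (abs_add_le _ _).trans ?_
      rw [abs_mul, abs_of_nonneg he.1]
      have := mul_le_of_le_one_left (abs_nonneg (p.2 - b)) he.2
      have e2 : (2:ℝ)/2^n = 1/2^n + 1/2^n := by ring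
      linarith
    refine measure_mono_null hsub (measure_union_null ?_ ?_) <;>
      simp [Measure.prod_prod, hs]
  have h1 := l2_lower ρ (2/2^n) A hρA
  have hρu : ρ univ = (ν univ)^2 := by
    rw [hρ, Measure.map_apply hfm MeasurableSet.univ, preimage_univ, ← univ_prod_univ,
      Measure.prod_prod, sq]
  have hD : MeasurableSet {p : ℝ × ℝ | |p.1 - p.2| ≤ 2*(2/2^n)} :=
    (isClosed_le (by fun_prop) (by fun_prop)).measurableSet
  have e3 : 2*((2:ℝ)/2^n) = 4/2^n := by ring
  have hQ : (ρ.prod ρ) {p | |p.1 - p.2| ≤ 2*(2/2^n)} = Q ν n e := by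
    rw [hρ, Measure.map_prod_map _ _ hfm hfm, Measure.map_apply (by fun_prop) hD, e3]
    rfl
  rw [hQ, hρu, e3] at h1
  have h2 : volume (Metric.cthickening (2/2^n) A) ≤ volume (Metric.cthickening (4/2^n) D) := by
    refine measure_mono ((Metric.cthickening_cthickening_subset (by positivity) (by positivity) _).trans_eq ?_)
    congr 1
    ring
  have hc0 : ENNReal.ofReal (4/2^n) ≠ 0 := by
    rw [Ne, ENNReal.ofReal_eq_zero, not_le]; positivity
  have h3 : ENNReal.ofReal (4/2^n) * (ENNReal.ofReal (4/2^n) * (ν univ)^4) ≤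
      ENNReal.ofReal (4/2^n) * (Q ν n e * volume (Metric.cthickening (4/2^n) D)) := by
    calc _ = (ENNReal.ofReal (4/2^n) * (ν univ)^2)^2 := by ring
      _ ≤ _ := h1
      _ ≤ ENNReal.ofReal (4/2^n) * Q ν n e * volume (Metric.cthickening (4/2^n) D) := by gcongr
      _ = _ := by ring
  exact (ENNReal.mul_le_mul_iff_right hc0 ENNReal.ofReal_ne_top).1 h3

lemma main_compact (K : Set ℝ) (hK : IsCompact K) (hsub : K ⊆ Ico (0:ℝ) 1) (hpos : 0 < h K) :
    ∃ e ∈ Icc (0 : ℝ) 1, 0 < volume (image2 (fun a b : ℝ => a + e * b) K K) := by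
  by_contra hcon
  push Not at hcon
  have hle1 := h_le_one hsub
  have hfin : ∀ n, IsFiniteMeasure (nu K n) := fun n =>
    ⟨by rw [nu_univ]; exact hle1.trans_lt ENNReal.one_lt_top⟩
  let q : ℕ → ℝ → ℝ≥0∞ := fun n e => ENNReal.ofReal (2^n) * Q (nu K n) n e
  have hqm : ∀ n, Measurable (q n) := fun n =>
    (measurable_measure_prodMk_left (Wset_meas n)).const_mul _
  have hqint : ∀ n, ∫⁻ e in Icc (0:ℝ) 1, q n e ≤ 52000 := by
    intro n
    simp only [q]
    rw [lintegral_const_mul' _ _ ENNReal.ofReal_ne_top]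
    calc _ ≤ ENNReal.ofReal (2^n) * (ENNReal.ofReal (16/2^n) * 3250) := by
          gcongr
          exact energy (nu K n) (by rw [nu_univ]; exact hle1) n (fun k hk x => nu_ball hsub hk x)
      _ = ENNReal.ofReal 16 * 3250 := by
        rw [← mul_assoc, ← ENNReal.ofReal_mul (by positivity), mul_div_cancel₀ _ (by positivity)]
      _ = 52000 := by norm_num
  have hlow : ∀ e ∈ Icc (0:ℝ) 1, Tendsto (fun n => q n e) atTop (𝓝 ∞) := by
    intro e he
    have hDc : IsCompact (image2 (fun a b : ℝ => a + e * b) K K) := by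
      rw [← image_prod]
      exact (hK.prod hK).image (by fun_prop)
    set D := image2 (fun a b : ℝ => a + e * b) K K
    have hD0 : volume D = 0 := by simpa using hcon e he
    have ht : Tendsto (fun n : ℕ => volume (Metric.cthickening (4/2^n) D)) atTop (𝓝 0) := by
      rw [← hD0]
      refine (tendsto_measure_cthickening_of_isCompact hDc).comp ?_
      have := (tendsto_pow_atTop_nhds_zero_of_lt_one (r := (1/2:ℝ)) (by norm_num) (by norm_num)).const_mul 4
      simpa [div_eq_mul_inv] using this
    have hc : 4 * (h K)^4 ≠ 0 := by
      simp [hpos.ne']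
    have hdiv : Tendsto (fun n : ℕ => 4 * (h K)^4 / volume (Metric.cthickening (4/2^n) D)) atTop
        (𝓝 ∞) := by
      have := ENNReal.Tendsto.const_div (a := 4 * (h K)^4) ht (Or.inr (by
        refine ENNReal.mul_ne_top (by simp) (ENNReal.pow_ne_top ?_)
        exact (hle1.trans_lt ENNReal.one_lt_top).ne))
      rwa [ENNReal.div_zero hc] at this
    refine tendsto_of_tendsto_of_tendsto_of_le_of_le hdiv tendsto_const_nhds (fun n => ?_)
      (fun n => le_top)
    refine ENNReal.div_le_of_le_mul ?_
    have h1 := lower (nu K n) n K hK (nu_supp hsub n) e he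
    rw [nu_univ] at h1
    calc 4 * (h K)^4 = ENNReal.ofReal (2^n) * (ENNReal.ofReal (4/2^n) * (h K)^4) := by
          rw [← mul_assoc, ← ENNReal.ofReal_mul (by positivity), mul_div_cancel₀ _ (by positivity)]
          simp
      _ ≤ ENNReal.ofReal (2^n) * (Q (nu K n) n e * volume (Metric.cthickening (4/2^n) D)) := by
          gcongr
      _ = _ := by simp only [q]; ring
  have hF := lintegral_liminf_le (μ := volume.restrict (Icc (0:ℝ) 1)) (u := atTop) hqm
  have h1 : ∫⁻ e in Icc (0:ℝ) 1, liminf (fun n => q n e) atTop = ∞ := by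
    rw [setLIntegral_congr_fun measurableSet_Icc (g := fun _ => ∞)
      (fun e he => (hlow e he).liminf_eq)]
    simp
  rw [h1] at hF
  have h2 : liminf (fun n => ∫⁻ e in Icc (0:ℝ) 1, q n e) atTop ≤ 52000 := by
    refine (liminf_le_liminf (Eventually.of_forall hqint)).trans_eq ?_
    exact tendsto_const_nhds.liminf_eq
  have := hF.trans h2
  simp at this

end Frost

theorem stmt19 (E : Set ℝ) (hE : MeasurableSet E) (hsub : E ⊆ Set.Ico (0 : ℝ) 1)
    (hdim : dimH E = 1) :
    ∃ e ∈ Set.Icc (0 : ℝ) 1, 0 < volume (Set.image2 (fun a b : ℝ => a + e * b) E E) := by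
  obtain ⟨K, hKE, hKc, hK⟩ := Frost.exists_compact hE hsub hdim
  obtain ⟨e, he, hpos⟩ := Frost.main_compact K hKc (hKE.trans hsub) hK
  exact ⟨e, he, hpos.trans_le (measure_mono (Set.image2_subset hKE hKE))⟩
end
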